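/- arXiv:2403.02851 — 3 statements merged into one kernel-verified Lean document; each statement's English description precedes it below -/
import Mathlib

section
/- Let f_n(q) = Σ_{k=0}^n binom(n,k)·qᵏ·(−i)^{n−k} be the n-fold ∗-power of q − i. Then lim_{n→∞} m_ℍ(f_n)/n = (1 + 2G)/π − 1/4, where G = Σ_{k=0}^∞ (−1)ᵏ/(2k+1)² is Catalan's constant. -/
open MeasureTheory Quaternion

noncomputable instance : MeasurableSpace (Quaternion ℝ) := borel _
instance : BorelSpace (Quaternion ℝ) := ⟨rfl⟩
instance : Nonempty (Metric.sphere (0 : Quaternion ℝ) 1) := ⟨⟨1, by simp⟩⟩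

/-- The probability Haar measure `μ` on the group `T¹(ℍ)` of unit quaternions
(the Haar measure normalized so that the whole group has measure `1`). -/
noncomputable def muH : Measure (Metric.sphere (0 : Quaternion ℝ) 1) :=
  Measure.haarMeasure ⊤

/-- The quaternionic Mahler measure `m_ℍ(f) = ∫_{T¹(ℍ)} log |f(q)| dμ(q)`. -/
noncomputable def mahlerH (f : Quaternion ℝ → Quaternion ℝ) : ℝ :=
  ∫ q : Metric.sphere (0 : Quaternion ℝ) 1, Real.log ‖f q‖ ∂muH
/-- The standard imaginary unit `i` of the quaternions. -/
noncomputable def qI : Quaternion ℝ := ⟨0, 1, 0, 0⟩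
/-- The standard imaginary unit `j` of the quaternions. -/
noncomputable def qJ : Quaternion ℝ := ⟨0, 0, 1, 0⟩
/-- The standard imaginary unit `k` of the quaternions. -/
noncomputable def qK : Quaternion ℝ := ⟨0, 0, 0, 1⟩

/-- The value at `q` of the `n`-fold `∗`-power of `q - i`. -/
noncomputable def starPow (n : ℕ) (q : ℍ[ℝ]) : ℍ[ℝ] :=
  ∑ k ∈ Finset.range (n + 1), (n.choose k : ℍ[ℝ]) * q ^ k * (-qI) ^ (n - k)

lemma starPow_eq_pow_apply (n : ℕ) (q : ℍ[ℝ]) :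
    starPow n q = ((LinearMap.mulLeft ℝ q + LinearMap.mulRight ℝ (-qI)) ^ n) 1 := by
  have hc : Commute (LinearMap.mulLeft ℝ q) (LinearMap.mulRight ℝ (-qI)) :=
    LinearMap.commute_mulLeft_right ..
  rw [hc.add_pow, starPow, LinearMap.sum_apply]
  refine Finset.sum_congr rfl fun k _ => ?_
  have h : ((n.choose k : Module.End ℝ ℍ[ℝ])) (1 : ℍ[ℝ]) = (n.choose k : ℍ[ℝ]) := by
    simp
  rw [Module.End.mul_apply, h, Module.End.mul_apply, LinearMap.pow_mulLeft,
    LinearMap.pow_mulRight, LinearMap.mulLeft_apply, LinearMap.mulRight_apply]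
  rw [← mul_assoc, Nat.cast_comm]

lemma starPow_zero (q : ℍ[ℝ]) : starPow 0 q = 1 := by simp [starPow]

lemma starPow_succ (n : ℕ) (q : ℍ[ℝ]) :
    starPow (n + 1) q = q * starPow n q - starPow n q * qI := by
  rw [starPow_eq_pow_apply, starPow_eq_pow_apply, pow_succ', Module.End.mul_apply,
    LinearMap.add_apply, LinearMap.mulLeft_apply, LinearMap.mulRight_apply, mul_neg,
    ← sub_eq_add_neg]

@[simp] lemma re_qI : qI.re = 0 := rfl

@[simp] lemma imI_qI : qI.imI = 1 := rfl

@[simp] lemma imJ_qI : qI.imJ = 0 := rfl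

@[simp] lemma imK_qI : qI.imK = 0 := rfl

lemma norm_qI : ‖qI‖ = 1 := by
  have h : ‖qI‖ * ‖qI‖ = 1 := by
    rw [← Quaternion.normSq_eq_norm_mul_self, Quaternion.normSq_def']; simp
  nlinarith [norm_nonneg qI]

lemma norm_sq_eq_re_sq_add_norm_im_sq (q : ℍ[ℝ]) : ‖q‖ ^ 2 = q.re ^ 2 + ‖q.im‖ ^ 2 := by
  rw [sq ‖q‖, sq ‖q.im‖, ← Quaternion.normSq_eq_norm_mul_self,
    ← Quaternion.normSq_eq_norm_mul_self, Quaternion.normSq_def', Quaternion.normSq_def']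
  simp
  ring

lemma norm_im_sq (q : ℍ[ℝ]) : ‖q.im‖ ^ 2 = q.imI ^ 2 + q.imJ ^ 2 + q.imK ^ 2 := by
  rw [sq ‖q.im‖, ← Quaternion.normSq_eq_norm_mul_self, Quaternion.normSq_def']
  simp

lemma norm_mul_sub_mul_qI_sq_le {q : ℍ[ℝ]} (hq : ‖q‖ = 1) (w : ℍ[ℝ]) :
    ‖q * w - w * qI‖ ^ 2 ≤ (2 + 2 * ‖q.im‖) * ‖w‖ ^ 2 := by
  have hw : inner ℝ w (w * qI) = 0 := by
    rw [Quaternion.inner_def]; simp; ring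
  have hqw : inner ℝ (q * w) (w * qI) = inner ℝ (q.im * w) (w * qI) := by
    conv_lhs => rw [← Quaternion.re_add_im q]
    rw [add_mul, inner_add_left, Quaternion.coe_mul_eq_smul, inner_smul_left, hw]
    simp
  have hcs := neg_le_of_abs_le (abs_real_inner_le_norm (q.im * w) (w * qI))
  rw [norm_mul, norm_mul, norm_qI, mul_one] at hcs
  rw [norm_sub_sq_real, norm_mul, norm_mul, norm_qI, hq, hqw]
  nlinarith

lemma norm_starPow_sq_le {q : ℍ[ℝ]} (hq : ‖q‖ = 1) (n : ℕ) :
    ‖starPow n q‖ ^ 2 ≤ (2 + 2 * ‖q.im‖) ^ n := by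
  induction n with
  | zero => simp [starPow_zero]
  | succ n ih =>
    rw [starPow_succ, pow_succ' _ n]
    refine (norm_mul_sub_mul_qI_sq_le hq _).trans ?_
    gcongr

lemma im_mul_im (q : ℍ[ℝ]) : q.im * q.im = -((‖q.im‖ ^ 2 : ℝ) : ℍ[ℝ]) := by
  have h := norm_im_sq q
  generalize ‖q.im‖ ^ 2 = r at h
  ext <;> simp <;> linarith

lemma qI_mul_qI : qI * qI = -1 := by ext <;> simp

/-- The component of `T ^ n 1` in an eigenspace of left multiplication by `q.im` composed with
right multiplication by `i`, where `T w = q * w - w * i`. -/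
lemma smul_starPow_add (n : ℕ) (q : ℍ[ℝ]) :
    ‖q.im‖ • starPow n q + q.im * starPow n q * qI =
      (‖q.im‖ • (1 : ℍ[ℝ]) + q.im * qI) * ((q.re : ℍ[ℝ]) - (1 + ‖q.im‖) • qI) ^ n := by
  induction n with
  | zero => simp [starPow_zero]
  | succ n ih =>
    rw [pow_succ, ← mul_assoc, ← ih, starPow_succ]
    set w := starPow n q
    set y := ‖q.im‖ with hy
    have h1 : q * w = q.re • w + q.im * w := by
      conv_lhs => rw [← Quaternion.re_add_im q]
      rw [add_mul, Quaternion.coe_mul_eq_smul]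
    have h2 : q.im * (q.im * w) = -(y ^ 2 • w) := by
      rw [← mul_assoc, im_mul_im, neg_mul, Quaternion.coe_mul_eq_smul]
    have h3 : ∀ u : ℍ[ℝ], u * qI * qI = -u := fun u => by
      rw [mul_assoc, qI_mul_qI, mul_neg, mul_one]
    have h4 : ∀ u : ℍ[ℝ], u * (q.re : ℍ[ℝ]) = q.re • u := fun u => by
      rw [← Quaternion.coe_commutes, Quaternion.coe_mul_eq_smul]
    rw [h1]
    simp only [mul_add, add_mul, mul_sub, sub_mul, mul_smul_comm, smul_mul_assoc, h2, h3, h4,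
      smul_add, smul_sub, neg_mul, ← mul_assoc]
    module

lemma norm_smul_one_add_sq (q : ℍ[ℝ]) :
    ‖‖q.im‖ • (1 : ℍ[ℝ]) + q.im * qI‖ ^ 2 = 2 * ‖q.im‖ * (‖q.im‖ - q.imI) := by
  have h := norm_im_sq q
  rw [sq ‖‖q.im‖ • (1 : ℍ[ℝ]) + q.im * qI‖, ← Quaternion.normSq_eq_norm_mul_self,
    Quaternion.normSq_def']
  simp
  linear_combination -h

lemma norm_coe_re_sub_smul_qI_sq {q : ℍ[ℝ]} (hq : ‖q‖ = 1) :
    ‖(q.re : ℍ[ℝ]) - (1 + ‖q.im‖) • qI‖ ^ 2 = 2 + 2 * ‖q.im‖ := by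
  have h := norm_sq_eq_re_sq_add_norm_im_sq q
  rw [hq] at h
  rw [sq ‖(q.re : ℍ[ℝ]) - (1 + ‖q.im‖) • qI‖, ← Quaternion.normSq_eq_norm_mul_self,
    Quaternion.normSq_def']
  simp
  linear_combination -h

lemma le_norm_starPow_sq {q : ℍ[ℝ]} (hq : ‖q‖ = 1) (n : ℕ) :
    (q.imJ / 2) ^ 2 * (2 + 2 * ‖q.im‖) ^ n ≤ ‖starPow n q‖ ^ 2 := by
  set y := ‖q.im‖ with hy
  have hyy := norm_im_sq q
  have hn := norm_sq_eq_re_sq_add_norm_im_sq q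
  rw [hq] at hn
  rw [← hy] at hyy hn
  have hy0 : 0 ≤ y := norm_nonneg _
  have hy1 : y ≤ 1 := by nlinarith [sq_nonneg q.re]
  rcases hy0.eq_or_lt with h0 | hpos
  · have : q.imJ = 0 := by
      rw [← h0] at hyy; nlinarith [sq_nonneg q.imI, sq_nonneg q.imJ, sq_nonneg q.imK]
    rw [this]; simp
  have hle : ‖y • starPow n q + q.im * starPow n q * qI‖ ≤ 2 * y * ‖starPow n q‖ := by
    refine (norm_add_le _ _).trans (le_of_eq ?_)
    rw [norm_smul, norm_mul, norm_mul, norm_qI, Real.norm_of_nonneg hy0, ← hy]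
    ring
  have hsq := pow_le_pow_left₀ (norm_nonneg _) hle 2
  rw [smul_starPow_add, norm_mul, norm_pow, mul_pow, ← pow_mul, mul_comm n 2, pow_mul,
    norm_smul_one_add_sq, norm_coe_re_sub_smul_qI_sq hq, ← hy] at hsq
  have hb : q.imI ≤ y :=
    (abs_le_of_sq_le_sq' (by nlinarith [sq_nonneg q.imJ, sq_nonneg q.imK]) hy0).2
  have hJ : q.imJ ^ 2 * y ≤ 2 * (y - q.imI) := by
    have h1 : q.imJ ^ 2 ≤ (y - q.imI) * (y + q.imI) := by nlinarith [sq_nonneg q.imK]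
    have h2 : (y + q.imI) * y ≤ 2 := by nlinarith
    nlinarith
  have hP : 0 ≤ (2 + 2 * y) ^ n := by positivity
  set P := (2 + 2 * y) ^ n
  have : y ^ 2 * ((q.imJ / 2) ^ 2 * P) ≤ y ^ 2 * ‖starPow n q‖ ^ 2 := by
    have := mul_le_mul_of_nonneg_left hJ (mul_nonneg hpos.le hP)
    nlinarith
  exact le_of_mul_le_mul_left this (by positivity)

open Set Metric in
lemma lintegral_norm_inv_smul_mul_norm {E : Type*} [NormedAddCommGroup E] [NormedSpace ℝ E]
    [MeasurableSpace E] [FiniteDimensional ℝ E] [BorelSpace E] [Nontrivial E] (μ : Measure E)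
    [μ.IsAddHaarMeasure] {F : E → ENNReal} (hF : Measurable F) {h : ℝ → ENNReal}
    (hh : Measurable h) :
    ∫⁻ x, F (‖x‖⁻¹ • x) * h ‖x‖ ∂μ = (∫⁻ x, F x ∂μ.toSphere) *
      ∫⁻ r in Ioi (0 : ℝ), ENNReal.ofReal (r ^ (Module.finrank ℝ E - 1)) * h r := by
  have hms : MeasurableSet ({0}ᶜ : Set E) := (measurableSet_singleton _).compl
  have hF' : Measurable fun x : sphere (0 : E) 1 => F x := by fun_prop
  have hh' : Measurable fun r : Ioi (0 : ℝ) => h r := by fun_prop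
  calc ∫⁻ x, F (‖x‖⁻¹ • x) * h ‖x‖ ∂μ
      = ∫⁻ x : ({0}ᶜ : Set E), F (‖x.1‖⁻¹ • x.1) * h ‖x.1‖ ∂(μ.comap (↑)) := by
        rw [lintegral_subtype_comap hms fun x => F (‖x‖⁻¹ • x) * h ‖x‖,
          restrict_compl_singleton]
    _ = ∫⁻ p, F p.1 * h p.2
          ∂μ.toSphere.prod (Measure.volumeIoiPow (Module.finrank ℝ E - 1)) := by
        have := μ.measurePreserving_homeomorphUnitSphereProd.lintegral_comp_emb
          (Homeomorph.measurableEmbedding _)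
          (fun p : sphere (0 : E) 1 × Ioi (0 : ℝ) => F p.1 * h p.2)
        simpa using this
    _ = _ := by
        rw [lintegral_prod_mul hF'.aemeasurable hh'.aemeasurable, Measure.volumeIoiPow,
          lintegral_withDensity_eq_lintegral_mul _ (by fun_prop) hh',
          ← lintegral_subtype_comap measurableSet_Ioi]
        simp

open Set Metric in
lemma lintegral_fun_norm {E : Type*} [NormedAddCommGroup E] [NormedSpace ℝ E]
    [MeasurableSpace E] [FiniteDimensional ℝ E] [BorelSpace E] [Nontrivial E] (μ : Measure E)
    [μ.IsAddHaarMeasure] {h : ℝ → ENNReal} (hh : Measurable h) :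
    ∫⁻ x, h ‖x‖ ∂μ = μ.toSphere univ *
      ∫⁻ r in Ioi (0 : ℝ), ENNReal.ofReal (r ^ (Module.finrank ℝ E - 1)) * h r := by
  simpa using lintegral_norm_inv_smul_mul_norm μ (F := fun _ => 1) measurable_const hh

/-- Left multiplication by a unit quaternion, as a linear isometry. -/
noncomputable def mulLeftIsometry (g : Metric.sphere (0 : ℍ[ℝ]) 1) : ℍ[ℝ] ≃ₗᵢ[ℝ] ℍ[ℝ] where
  toFun q := g * q
  invFun q := (g⁻¹ : Metric.sphere (0 : ℍ[ℝ]) 1) * q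
  map_add' := mul_add _
  map_smul' c q := mul_smul_comm c _ q
  left_inv q := by
    change ((g⁻¹ : Metric.sphere (0 : ℍ[ℝ]) 1) : ℍ[ℝ]) * (g * q) = q
    rw [← mul_assoc, ← Metric.unitSphere.coe_mul, inv_mul_cancel, Metric.unitSphere.coe_one,
      one_mul]
  right_inv q := by
    change (g : ℍ[ℝ]) * ((g⁻¹ : Metric.sphere (0 : ℍ[ℝ]) 1) * q) = q
    rw [← mul_assoc, ← Metric.unitSphere.coe_mul, mul_inv_cancel, Metric.unitSphere.coe_one,
      one_mul]
  norm_map' q := by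
    change ‖(g : ℍ[ℝ]) * q‖ = ‖q‖
    simp

open scoped Pointwise in
instance : (volume : Measure ℍ[ℝ]).toSphere.IsMulLeftInvariant where
  map_mul_left_eq_self g := by
    ext s hs
    have hm : Measurable fun x : Metric.sphere (0 : ℍ[ℝ]) 1 => g * x :=
      (continuous_const.mul continuous_id).measurable
    rw [Measure.map_apply hm hs, Measure.toSphere_apply' _ (hm hs), Measure.toSphere_apply' _ hs]
    congr 1
    have hpre : Set.Ioo (0 : ℝ) 1 • ((↑) '' ((fun x => g * x) ⁻¹' s) : Set ℍ[ℝ]) =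
        mulLeftIsometry g ⁻¹' (Set.Ioo (0 : ℝ) 1 • ((↑) '' s : Set ℍ[ℝ])) := by
      ext q
      simp only [Set.mem_smul, Set.mem_preimage, Set.mem_image]
      constructor
      · rintro ⟨r, hr, _, ⟨x, hx, rfl⟩, rfl⟩
        refine ⟨r, hr, _, ⟨_, hx, rfl⟩, ?_⟩
        rw [map_smul]
        rfl
      · rintro ⟨r, hr, _, ⟨x, hx, rfl⟩, h⟩
        refine ⟨r, hr, _, ⟨g⁻¹ * x, by simpa using hx, rfl⟩, ?_⟩
        apply (mulLeftIsometry g).injective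
        rw [← h, map_smul]
        congr 1
        change (g : ℍ[ℝ]) * ((g⁻¹ * x : Metric.sphere (0 : ℍ[ℝ]) 1)) = x
        rw [← Metric.unitSphere.coe_mul, mul_inv_cancel_left]
    rw [hpre]
    exact (mulLeftIsometry g).measurePreserving.measure_preimage_emb
      (mulLeftIsometry g).toHomeomorph.measurableEmbedding _

lemma toSphere_volume_eq_smul_muH :
    (volume : Measure ℍ[ℝ]).toSphere = (volume : Measure ℍ[ℝ]).toSphere Set.univ • muH := by
  have := Measure.haarMeasure_unique (volume : Measure ℍ[ℝ]).toSphere ⊤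
  simpa [muH] using this

instance : IsProbabilityMeasure muH :=
  ⟨by simpa [muH] using Measure.haarMeasure_self (G := Metric.sphere (0 : ℍ[ℝ]) 1) (K₀ := ⊤)⟩

instance : muH.IsMulLeftInvariant := inferInstanceAs (Measure.haarMeasure ⊤).IsMulLeftInvariant

lemma lintegral_quaternion_re_norm_im {g : ℝ × ℝ → ENNReal} (hg : Measurable g) :
    ∫⁻ q : ℍ[ℝ], g (q.re, ‖q.im‖) =
      ∫⁻ x : ℝ, ∫⁻ v : EuclideanSpace ℝ (Fin 3), g (x, ‖v‖) := by
  have h1 := Quaternion.linearIsometryEquivTuple.measurePreserving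
  have h2 := (PiLp.volume_preserving_toLp (Fin 4)).symm (MeasurableEquiv.toLp 2 (Fin 4 → ℝ))
  have h3 := volume_preserving_piFinSuccAbove (fun _ : Fin 4 => ℝ) 0
  have h4 : MeasurePreserving (Prod.map id (WithLp.toLp 2) : ℝ × (Fin 3 → ℝ) →
      ℝ × EuclideanSpace ℝ (Fin 3)) :=
    (MeasurePreserving.id volume).prod (PiLp.volume_preserving_toLp (Fin 3))
  have h := h4.comp (h3.comp (h2.comp h1))
  have hgm : Measurable fun p : ℝ × EuclideanSpace ℝ (Fin 3) => g (p.1, ‖p.2‖) := by fun_prop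
  rw [← lintegral_prod _ hgm.aemeasurable, ← Measure.volume_eq_prod, ← h.lintegral_comp hgm]
  refine lintegral_congr fun q => ?_
  congr 2
  have : ∀ a b : ℝ, 0 ≤ a → 0 ≤ b → a ^ 2 = b ^ 2 → a = b := fun a b ha hb h =>
    (pow_left_inj₀ ha hb two_ne_zero).1 h
  refine this _ _ (norm_nonneg _) (norm_nonneg _) ?_
  rw [norm_im_sq, EuclideanSpace.norm_sq_eq, Fin.sum_univ_three]
  simp [MeasurableEquiv.piFinSuccAbove, Fin.insertNthEquiv]

open Real Set in
lemma lintegral_re_toSphere {F : ℝ → ENNReal} (hF : Measurable F) :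
    ∫⁻ q : Metric.sphere (0 : ℍ[ℝ]) 1, F (q : ℍ[ℝ]).re ∂(volume : Measure ℍ[ℝ]).toSphere =
      (volume : Measure (EuclideanSpace ℝ (Fin 3))).toSphere univ *
        ∫⁻ θ in Ioo 0 π, ENNReal.ofReal (sin θ ^ 2) * F (cos θ) := by
  set h : ℝ → ENNReal := (Iio 1).indicator 1 with hh_def
  have hh : Measurable h := measurable_one.indicator measurableSet_Iio
  set K := ∫⁻ r in Ioi (0 : ℝ), ENNReal.ofReal (r ^ 3) * h r with hK
  have hK_eq : K = ENNReal.ofReal (1 / 4) := by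
    have h1 : ∀ r : ℝ, ENNReal.ofReal (r ^ 3) * h r =
        (Iio 1).indicator (fun r => ENNReal.ofReal (r ^ 3)) r := fun r => by
      by_cases hr : r < 1 <;> simp [hh_def, hr]
    simp_rw [hK, h1]
    rw [setLIntegral_indicator measurableSet_Iio, inter_comm, Ioi_inter_Iio,
      restrict_Ioo_eq_restrict_Ioc, ← ofReal_integral_eq_lintegral_ofReal
      (intervalIntegral.intervalIntegrable_pow 3).1,
      ← intervalIntegral.integral_of_le zero_le_one]
    · norm_num
    · filter_upwards [ae_restrict_mem measurableSet_Ioc] with y hy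
      exact pow_nonneg hy.1.le _
  have hK0 : K ≠ 0 := by rw [hK_eq]; simp
  have hKt : K ≠ ⊤ := by rw [hK_eq]; exact ENNReal.ofReal_ne_top
  set g : ℝ × ℝ → ENNReal := fun p =>
    F ((√(p.1 ^ 2 + p.2 ^ 2))⁻¹ * p.1) * h (√(p.1 ^ 2 + p.2 ^ 2)) with hg_def
  have hg : Measurable g := by fun_prop
  have hre : Measurable fun q : ℍ[ℝ] => F q.re := hF.comp Quaternion.continuous_re.measurable
  have hfr : Module.finrank ℝ ℍ[ℝ] = 4 := Quaternion.finrank_eq_four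
  have hfr3 : Module.finrank ℝ (EuclideanSpace ℝ (Fin 3)) = 3 := by simp
  have hsphere := lintegral_norm_inv_smul_mul_norm (volume : Measure ℍ[ℝ]) hre hh
  rw [hfr, show 4 - 1 = 3 from rfl, ← hK] at hsphere
  have hquat : ∫⁻ q : ℍ[ℝ], F (‖q‖⁻¹ • q).re * h ‖q‖ = ∫⁻ q : ℍ[ℝ], g (q.re, ‖q.im‖) := by
    refine lintegral_congr fun q => ?_
    rw [hg_def]
    simp only
    rw [← norm_sq_eq_re_sq_add_norm_im_sq, Real.sqrt_sq (norm_nonneg _)]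
    simp
  have hrad : ∀ x : ℝ, ∫⁻ v : EuclideanSpace ℝ (Fin 3), g (x, ‖v‖) =
      (volume : Measure (EuclideanSpace ℝ (Fin 3))).toSphere univ *
        ∫⁻ r, (Ioi (0 : ℝ)).indicator (fun r => ENNReal.ofReal (r ^ 2) * g (x, r)) r := fun x => by
    rw [lintegral_fun_norm volume (h := fun r => g (x, r)) (by fun_prop), hfr3,
      lintegral_indicator measurableSet_Ioi]
  set G : ℝ × ℝ → ENNReal := fun p =>
    (Ioi (0 : ℝ)).indicator (fun r => ENNReal.ofReal (r ^ 2) * g (p.1, r)) p.2 with hG_def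
  have hG : Measurable G := by
    have : G = {p : ℝ × ℝ | 0 < p.2}.indicator
        (fun p => ENNReal.ofReal (p.2 ^ 2) * g (p.1, p.2)) := by
      ext p; by_cases hp : 0 < p.2 <;> simp [hG_def, hp]
    rw [this]
    exact Measurable.indicator (by fun_prop) (measurableSet_lt measurable_const measurable_snd)
  have hpolar : ∫⁻ p, G p = K * ∫⁻ θ in Ioo 0 π, ENNReal.ofReal (sin θ ^ 2) * F (cos θ) := by
    rw [← lintegral_comp_polarCoord_symm, polarCoord_target]
    have hpt : ∀ p ∈ Ioi (0 : ℝ) ×ˢ Ioo (-π) π, ENNReal.ofReal p.1 • G (polarCoord.symm p) =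
        (ENNReal.ofReal (p.1 ^ 3) * h p.1) *
          (Ioo 0 π).indicator (fun θ => ENNReal.ofReal (sin θ ^ 2) * F (cos θ)) p.2 := by
      rintro ⟨ρ, θ⟩ ⟨hρ, hθ1, hθ2⟩
      simp only [mem_Ioi] at hρ hθ1 hθ2
      simp only [polarCoord_symm_apply, hG_def]
      by_cases hθ : 0 < θ
      · have hs : 0 < sin θ := sin_pos_of_pos_of_lt_pi hθ hθ2
        rw [indicator_of_mem (mem_Ioi.2 (mul_pos hρ hs)), indicator_of_mem (mem_Ioo.2 ⟨hθ, hθ2⟩), hg_def]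
        have hsq : √((ρ * cos θ) ^ 2 + (ρ * sin θ) ^ 2) = ρ := by
          rw [show (ρ * cos θ) ^ 2 + (ρ * sin θ) ^ 2 = ρ ^ 2 by
            linear_combination ρ ^ 2 * sin_sq_add_cos_sq θ, Real.sqrt_sq hρ.le]
        simp only [hsq, inv_mul_cancel_left₀ hρ.ne', smul_eq_mul]
        rw [mul_pow, ENNReal.ofReal_mul (by positivity), show ρ ^ 3 = ρ * ρ ^ 2 by ring,
          ENNReal.ofReal_mul hρ.le]
        ring
      · have hs : sin θ ≤ 0 := sin_nonpos_of_nonpos_of_neg_pi_le (not_lt.1 hθ) hθ1.le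
        rw [indicator_of_notMem, indicator_of_notMem]
        · simp
        · exact fun h => hθ h.1
        · exact fun h => absurd (mem_Ioi.1 h) (not_lt.2 (mul_nonpos_of_nonneg_of_nonpos hρ.le hs))
    rw [setLIntegral_congr_fun (measurableSet_Ioi.prod measurableSet_Ioo) hpt,
      Measure.volume_eq_prod, ← Measure.prod_restrict,
      lintegral_prod_mul (f := fun r => ENNReal.ofReal (r ^ 3) * h r) (by fun_prop)
        (Measurable.indicator (by fun_prop) measurableSet_Ioo).aemeasurable, ← hK,
      setLIntegral_indicator measurableSet_Ioo, inter_eq_left.2]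
    exact Ioo_subset_Ioo_left (by linarith [pi_pos])
  have hmain : (∫⁻ q : Metric.sphere (0 : ℍ[ℝ]) 1, F (q : ℍ[ℝ]).re
      ∂(volume : Measure ℍ[ℝ]).toSphere) * K =
      ((volume : Measure (EuclideanSpace ℝ (Fin 3))).toSphere univ *
        ∫⁻ θ in Ioo 0 π, ENNReal.ofReal (sin θ ^ 2) * F (cos θ)) * K := by
    rw [← hsphere, hquat, lintegral_quaternion_re_norm_im hg]
    simp_rw [hrad]
    have hprod := lintegral_prod (μ := (volume : Measure ℝ)) (ν := (volume : Measure ℝ)) G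
      hG.aemeasurable
    rw [lintegral_const_mul _ hG.lintegral_prod_right', ← hprod, ← Measure.volume_eq_prod, hpolar]
    ring
  exact (ENNReal.mul_left_inj hK0 hKt).1 hmain

open Real Set in
lemma lintegral_re_muH {F : ℝ → ENNReal} (hF : Measurable F) :
    ∫⁻ q : Metric.sphere (0 : ℍ[ℝ]) 1, F (q : ℍ[ℝ]).re ∂muH =
      ENNReal.ofReal (2 / π) * ∫⁻ θ in Ioo 0 π, ENNReal.ofReal (sin θ ^ 2) * F (cos θ) := by
  set σ := (volume : Measure ℍ[ℝ]).toSphere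
  have hσ0 : σ univ ≠ 0 := by
    rw [Ne, Measure.measure_univ_eq_zero]
    exact Measure.toSphere_ne_zero _
  have hσt : σ univ ≠ ⊤ := measure_ne_top _ _
  have hsin : ∫⁻ θ in Ioo 0 π, ENNReal.ofReal (sin θ ^ 2) = ENNReal.ofReal (π / 2) := by
    rw [restrict_Ioo_eq_restrict_Ioc, ← ofReal_integral_eq_lintegral_ofReal,
      ← intervalIntegral.integral_of_le pi_pos.le, integral_sin_sq]
    · simp
    · exact (Continuous.intervalIntegrable (by fun_prop) 0 π).1
    · exact ae_of_all _ fun θ => sq_nonneg _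
  have hone := lintegral_re_toSphere (F := fun _ => 1) measurable_const
  simp only [lintegral_const, one_mul, mul_one, hsin] at hone
  have hF' := lintegral_re_toSphere hF
  rw [toSphere_volume_eq_smul_muH, lintegral_smul_measure, smul_eq_mul, hone] at hF'
  have h2 : ENNReal.ofReal (π / 2) * ENNReal.ofReal (2 / π) = 1 := by
    rw [← ENNReal.ofReal_mul (by positivity)]
    simp [pi_ne_zero]
  rw [← ENNReal.mul_right_inj hσ0 hσt, show σ univ = _ from hone, hF',
    mul_assoc, ← mul_assoc (ENNReal.ofReal (π / 2)), h2, one_mul]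

open Real Set in
lemma map_re_muH :
    muH.map (fun q : Metric.sphere (0 : ℍ[ℝ]) 1 => (q : ℍ[ℝ]).re) =
      ((volume.restrict (Ioo 0 π)).withDensity
        fun θ => ENNReal.ofReal (2 / π * sin θ ^ 2)).map cos := by
  have hre : Measurable fun q : Metric.sphere (0 : ℍ[ℝ]) 1 => (q : ℍ[ℝ]).re :=
    (Quaternion.continuous_re.comp continuous_subtype_val).measurable
  refine Measure.ext_of_lintegral _ fun F hF => ?_
  rw [lintegral_map hF hre, lintegral_map hF (by fun_prop), lintegral_re_muH hF,
    lintegral_withDensity_eq_lintegral_mul _ (by fun_prop) (by fun_prop),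
    ← lintegral_const_mul _ (by fun_prop)]
  refine lintegral_congr fun θ => ?_
  rw [Pi.mul_apply, ENNReal.ofReal_mul (by positivity), mul_assoc]

open Real Set in
lemma integrable_re_muH_iff {F : ℝ → ℝ} (hF : Measurable F) :
    Integrable (fun q : Metric.sphere (0 : ℍ[ℝ]) 1 => F (q : ℍ[ℝ]).re) muH ↔
      IntegrableOn (fun θ => 2 / π * sin θ ^ 2 * F (cos θ)) (Ioo 0 π) := by
  have hre : Measurable fun q : Metric.sphere (0 : ℍ[ℝ]) 1 => (q : ℍ[ℝ]).re :=
    (Quaternion.continuous_re.comp continuous_subtype_val).measurable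
  rw [← Function.comp_def F, ← integrable_map_measure hF.aestronglyMeasurable hre.aemeasurable,
    map_re_muH, integrable_map_measure hF.aestronglyMeasurable (by fun_prop),
    integrable_withDensity_iff_integrable_smul' (by fun_prop) (by simp)]
  refine integrable_congr (ae_of_all _ fun θ => ?_)
  simp only [Function.comp, smul_eq_mul]
  rw [ENNReal.toReal_ofReal (by positivity)]

open Real Set in
lemma integral_re_muH {F : ℝ → ℝ} (hF : Measurable F) :
    ∫ q : Metric.sphere (0 : ℍ[ℝ]) 1, F (q : ℍ[ℝ]).re ∂muH = ∫ θ in 0..π, 2 / π * sin θ ^ 2 * F (cos θ) := by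
  have hre : Measurable fun q : Metric.sphere (0 : ℍ[ℝ]) 1 => (q : ℍ[ℝ]).re :=
    (Quaternion.continuous_re.comp continuous_subtype_val).measurable
  rw [← integral_map hre.aemeasurable hF.aestronglyMeasurable, map_re_muH,
    integral_map (by fun_prop) hF.aestronglyMeasurable,
    integral_withDensity_eq_integral_toReal_smul (by fun_prop) (by simp),
    intervalIntegral.integral_of_le pi_pos.le, integral_Ioc_eq_integral_Ioo]
  refine integral_congr_ae (ae_of_all _ fun θ => ?_)
  simp only [smul_eq_mul]
  rw [ENNReal.toReal_ofReal (by positivity)]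

open Real in
lemma log_one_add_two_mul_sin_hasSum {r : ℝ} (hr0 : 0 ≤ r) (hr1 : r < 1) (θ : ℝ) :
    HasSum (fun k : ℕ => -2 * r ^ (k + 1) / (k + 1) * cos ((k + 1) * (θ + π / 2)))
      (log (1 + 2 * r * sin θ + r ^ 2)) := by
  set z : ℂ := r * Complex.exp ((θ + π / 2 : ℝ) * Complex.I) with hz_def
  have hz : ‖z‖ < 1 := by
    rw [hz_def, norm_mul, Complex.norm_exp_ofReal_mul_I, mul_one, Complex.norm_real,
      norm_of_nonneg hr0]
    exact hr1
  have hs := (Complex.hasSum_re (Complex.hasSum_taylorSeries_neg_log' hz)).mul_left (-2)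
  have hre : z.re = -(r * sin θ) := by
    rw [hz_def, Complex.re_ofReal_mul, Complex.exp_ofReal_mul_I_re, cos_add_pi_div_two]; ring
  have him : z.im = r * cos θ := by
    rw [hz_def, Complex.im_ofReal_mul, Complex.exp_ofReal_mul_I_im, sin_add_pi_div_two]
  have hlog : -2 * (-Complex.log (1 - z)).re = log (1 + 2 * r * sin θ + r ^ 2) := by
    rw [Complex.neg_re, Complex.log_re, neg_mul_neg, ← Nat.cast_ofNat (R := ℝ), ← log_pow,
      Complex.sq_norm, Complex.normSq_apply]
    congr 1
    simp only [Complex.sub_re, Complex.sub_im, Complex.one_re, Complex.one_im, hre, him]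
    linear_combination r ^ 2 * sin_sq_add_cos_sq θ
  rw [hlog] at hs
  refine hs.congr_fun fun k => ?_
  have hk : z ^ (k + 1) / ((k : ℂ) + 1) =
      ((r ^ (k + 1) / (k + 1) : ℝ) : ℂ) * Complex.exp (((k + 1) * (θ + π / 2) : ℝ) * Complex.I) := by
    rw [hz_def, mul_pow, ← Complex.exp_nat_mul,
      show ((k + 1 : ℕ) : ℂ) * ((θ + π / 2 : ℝ) * Complex.I) =
        ((k + 1) * (θ + π / 2) : ℝ) * Complex.I by push_cast; ring]
    push_cast
    ring
  rw [hk, Complex.re_ofReal_mul, Complex.exp_ofReal_mul_I_re]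
  ring

open Real in
lemma integral_cos_succ_mul_add_pi_div_two (m : ℕ) :
    ∫ θ in 0..π, cos ((m + 1 : ℝ) * (θ + π / 2)) =
      (sin ((m + 1) * (π + π / 2)) - sin ((m + 1) * (π / 2))) / (m + 1) := by
  have hm : (m + 1 : ℝ) ≠ 0 := by positivity
  rw [intervalIntegral.integral_eq_sub_of_hasDerivAt
    (f := fun θ => sin ((m + 1 : ℝ) * (θ + π / 2)) / (m + 1))]
  · simp only [zero_add]; ring
  · intro θ _
    have h := (((hasDerivAt_id θ).add_const (π / 2)).const_mul (m + 1 : ℝ)).sin.div_const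
      (m + 1 : ℝ)
    refine h.congr_deriv ?_
    simp only [id]
    field_simp
  · exact Continuous.intervalIntegrable (by fun_prop) _ _

open Real in
lemma sin_odd_mul_pi_div_two (j : ℕ) : sin ((2 * j + 1) * (π / 2)) = (-1) ^ j := by
  rw [show (2 * j + 1 : ℝ) * (π / 2) = π / 2 + j * π by ring, sin_add_nat_mul_pi]
  simp

open Real in
lemma integral_log_one_add_two_mul_sin_hasSum {r : ℝ} (hr0 : 0 ≤ r) (hr1 : r < 1) :
    HasSum (fun j : ℕ => 4 * ((-1) ^ j / (2 * j + 1) ^ 2 * r ^ (2 * j + 1)))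
      (∫ θ in 0..π, log (1 + 2 * r * sin θ + r ^ 2)) := by
  have hsum : Summable fun k : ℕ => 2 * r ^ k :=
    (summable_geometric_of_lt_one hr0 hr1).mul_left 2
  have h := intervalIntegral.hasSum_integral_of_dominated_convergence (μ := volume) (a := 0)
    (b := π)
    (F := fun (k : ℕ) θ => -2 * r ^ (k + 1) / (k + 1) * cos ((k + 1) * (θ + π / 2)))
    (f := fun θ => log (1 + 2 * r * sin θ + r ^ 2)) (fun k _ => 2 * r ^ k)
    (fun k => Continuous.aestronglyMeasurable (by fun_prop))
    (fun k => ae_of_all _ fun θ _ => by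
      have h1 : |cos ((k + 1 : ℝ) * (θ + π / 2))| ≤ 1 := abs_cos_le_one _
      have h2 : |(k + 1 : ℝ)| = k + 1 := abs_of_pos (by positivity)
      rw [norm_eq_abs, abs_mul, abs_div, abs_mul, abs_neg, abs_two, h2,
        abs_of_nonneg (pow_nonneg hr0 _)]
      calc 2 * r ^ (k + 1) / (k + 1) * |cos ((k + 1 : ℝ) * (θ + π / 2))|
          ≤ 2 * r ^ (k + 1) / (k + 1) * 1 := by gcongr
        _ ≤ 2 * r ^ (k + 1) := by
          rw [mul_one]; exact div_le_self (by positivity) (by linarith [k.cast_nonneg (α := ℝ)])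
        _ ≤ 2 * r ^ k := by
          gcongr 2 * ?_
          exact pow_le_pow_of_le_one hr0 hr1.le (Nat.le_succ k))
    (ae_of_all _ fun _ _ => hsum) intervalIntegrable_const
    (ae_of_all _ fun θ _ => log_one_add_two_mul_sin_hasSum hr0 hr1 θ)
  simp_rw [intervalIntegral.integral_const_mul, integral_cos_succ_mul_add_pi_div_two] at h
  have hinj : Function.Injective fun j : ℕ => 2 * j := fun a b hab => by simpa using hab
  rw [← hinj.hasSum_iff] at h
  · refine h.congr_fun fun j => ?_
    have e1 : (((2 * j : ℕ) : ℝ) + 1) * (π + π / 2) =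
        (2 * (j : ℕ) + 1) * (π / 2) + ((2 * j + 1 : ℕ) : ℝ) * π := by
      push_cast; ring
    have e2 : (((2 * j : ℕ) : ℝ) + 1) * (π / 2) = (2 * (j : ℕ) + 1) * (π / 2) := by
      push_cast; ring
    have e3 : (-1 : ℝ) ^ (2 * j + 1) = -1 := by simp [pow_succ, pow_mul]
    simp only [Function.comp]
    rw [e1, e2, sin_add_nat_mul_pi, sin_odd_mul_pi_div_two, e3]
    have : (2 * j + 1 : ℝ) ≠ 0 := by positivity
    push_cast
    field_simp
    ring
  · intro k hk
    obtain ⟨j, hj⟩ : ∃ j, k = 2 * j + 1 := by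
      rcases Nat.even_or_odd' k with ⟨j, hj | hj⟩
      · exact absurd ⟨j, hj.symm⟩ hk
      · exact ⟨j, hj⟩
    have e1 : ((k : ℝ) + 1) * (π + π / 2) = ((3 * (j + 1) : ℕ) : ℝ) * π := by
      rw [hj]; push_cast; ring
    have e2 : ((k : ℝ) + 1) * (π / 2) = ((j + 1 : ℕ) : ℝ) * π := by
      rw [hj]; push_cast; ring
    rw [e1, e2, sin_nat_mul_pi, sin_nat_mul_pi]
    simp

lemma summable_one_div_odd_sq : Summable fun j : ℕ => 1 / (2 * j + 1 : ℝ) ^ 2 := by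
  have h : Summable fun n : ℕ => 1 / (n : ℝ) ^ 2 := Real.summable_one_div_nat_pow.2 one_lt_two
  have hinj : Function.Injective fun j : ℕ => 2 * j + 1 := fun a b hab => by simpa using hab
  refine (h.comp_injective hinj).congr fun j => ?_
  simp

open Real Filter Topology in
lemma integral_log_two_add_two_mul_sin :
    ∫ θ in 0..π, log (2 + 2 * sin θ) = 4 * ∑' k : ℕ, (-1 : ℝ) ^ k / (2 * k + 1) ^ 2 := by
  have hev : ∀ᶠ r : ℝ in 𝓝[<] 1, 0 ≤ r ∧ r < 1 := by
    filter_upwards [self_mem_nhdsWithin, mem_nhdsWithin_of_mem_nhds (Ioi_mem_nhds zero_lt_one)]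
      with r h1 h2 using ⟨le_of_lt h2, h1⟩
  have hl : Tendsto (fun r : ℝ => ∫ θ in 0..π, log (1 + 2 * r * sin θ + r ^ 2)) (𝓝[<] 1)
      (𝓝 (∫ θ in 0..π, log (2 + 2 * sin θ))) := by
    refine intervalIntegral.tendsto_integral_filter_of_dominated_convergence (fun _ => log 4)
      ?_ ?_ intervalIntegrable_const ?_
    · exact Eventually.of_forall fun r => Measurable.aestronglyMeasurable (by fun_prop)
    · filter_upwards [hev] with r ⟨hr0, hr1⟩
      refine ae_of_all _ fun θ hθ => ?_
      rw [Set.uIoc_of_le pi_pos.le] at hθ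
      have hs := sin_nonneg_of_nonneg_of_le_pi hθ.1.le hθ.2
      have hs1 := sin_le_one θ
      have h1 : 1 ≤ 1 + 2 * r * sin θ + r ^ 2 := by nlinarith [mul_nonneg hr0 hs]
      rw [norm_of_nonneg (log_nonneg h1)]
      exact log_le_log (by linarith) (by nlinarith)
    · refine ae_of_all _ fun θ hθ => ?_
      rw [Set.uIoc_of_le pi_pos.le] at hθ
      have hs := sin_nonneg_of_nonneg_of_le_pi hθ.1.le hθ.2
      have hc : ContinuousAt (fun r : ℝ => log (1 + 2 * r * sin θ + r ^ 2)) 1 :=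
        ContinuousAt.log (by fun_prop) (by positivity)
      have := hc.tendsto.mono_left (nhdsWithin_le_nhds (s := Set.Iio 1))
      convert this using 3
      ring
  have hr : Tendsto (fun r : ℝ => ∑' j : ℕ, 4 * ((-1) ^ j / (2 * j + 1) ^ 2 * r ^ (2 * j + 1)))
      (𝓝[<] 1) (𝓝 (∑' j : ℕ, 4 * ((-1 : ℝ) ^ j / (2 * j + 1) ^ 2))) := by
    refine tendsto_tsum_of_dominated_convergence (summable_one_div_odd_sq.mul_left 4) ?_ ?_
    · intro j
      have hc : Continuous fun r : ℝ =>
        4 * ((-1) ^ j / (2 * j + 1) ^ 2 * r ^ (2 * j + 1)) := by fun_prop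
      have := (hc.tendsto 1).mono_left (nhdsWithin_le_nhds (s := Set.Iio 1))
      simpa using this
    · filter_upwards [hev] with r ⟨hr0, hr1⟩ j
      have h2 : |(2 * j + 1 : ℝ)| = 2 * j + 1 := abs_of_pos (by positivity)
      rw [norm_eq_abs, abs_mul, abs_mul, abs_div, abs_pow, abs_pow, abs_neg, abs_one, one_pow, h2,
        abs_of_nonneg (pow_nonneg hr0 _), abs_of_pos (by norm_num : (0 : ℝ) < 4)]
      gcongr
      exact mul_le_of_le_one_right (by positivity) (pow_le_one₀ hr0 hr1.le)
  rw [← tsum_mul_left]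
  refine tendsto_nhds_unique hl (hr.congr' ?_)
  filter_upwards [hev] with r ⟨hr0, hr1⟩
  exact (integral_log_one_add_two_mul_sin_hasSum hr0 hr1).tsum_eq

open Real in
lemma integral_cos_two_mul_mul_log_add :
    ∫ θ in 0..π, (cos (2 * θ) * log (2 + 2 * sin θ) + (sin θ - sin θ ^ 2)) = 0 := by
  rw [intervalIntegral.integral_eq_sub_of_hasDerivAt
    (f := fun θ => sin θ * cos θ * log (2 + 2 * sin θ))]
  · simp
  · intro θ hθ
    rw [Set.uIcc_of_le pi_pos.le] at hθ
    have hs := sin_nonneg_of_nonneg_of_le_pi hθ.1 hθ.2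
    have hne : (2 + 2 * sin θ) ≠ 0 := by positivity
    have h := ((hasDerivAt_sin θ).mul (hasDerivAt_cos θ)).mul
      ((((hasDerivAt_sin θ).const_mul 2).const_add 2).log hne)
    refine h.congr_deriv ?_
    have hne' : 1 + sin θ ≠ 0 := by positivity
    rw [cos_two_mul', Pi.mul_apply]
    have : sin θ * cos θ * (2 * cos θ / (2 + 2 * sin θ)) = sin θ - sin θ ^ 2 := by
      field_simp
      linear_combination sin θ * sin_sq_add_cos_sq θ
    rw [this]
    ring
  · refine ContinuousOn.intervalIntegrable ?_
    rw [Set.uIcc_of_le pi_pos.le]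
    refine ContinuousOn.add (ContinuousOn.mul (by fun_prop) (ContinuousOn.log (by fun_prop) ?_))
      (by fun_prop)
    intro θ hθ
    have hs := sin_nonneg_of_nonneg_of_le_pi hθ.1 hθ.2
    positivity

open Real in
lemma integral_sin_sq_mul_log :
    ∫ θ in 0..π, 2 / π * sin θ ^ 2 * (log (2 + 2 * sin θ) / 2) =
      (1 + 2 * ∑' k : ℕ, (-1 : ℝ) ^ k / (2 * k + 1) ^ 2) / π - 1 / 4 := by
  have hlog : IntervalIntegrable (fun θ => log (2 + 2 * sin θ)) volume 0 π := by
    refine ContinuousOn.intervalIntegrable ?_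
    rw [Set.uIcc_of_le pi_pos.le]
    refine ContinuousOn.log (by fun_prop) fun θ hθ => ?_
    have hs := sin_nonneg_of_nonneg_of_le_pi hθ.1 hθ.2
    positivity
  have hcos : IntervalIntegrable (fun θ => cos (2 * θ) * log (2 + 2 * sin θ)) volume 0 π :=
    hlog.continuousOn_mul (by fun_prop)
  have hss : IntervalIntegrable (fun θ => sin θ - sin θ ^ 2) volume 0 π :=
    Continuous.intervalIntegrable (by fun_prop) _ _
  have h0 := integral_cos_two_mul_mul_log_add
  rw [intervalIntegral.integral_add hcos hss, intervalIntegral.integral_sub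
    (Continuous.intervalIntegrable (by fun_prop) _ _)
    (Continuous.intervalIntegrable (by fun_prop) _ _), integral_sin, integral_sin_sq] at h0
  have hpt : ∀ θ : ℝ, 2 / π * sin θ ^ 2 * (log (2 + 2 * sin θ) / 2) =
      1 / (2 * π) * (log (2 + 2 * sin θ) - cos (2 * θ) * log (2 + 2 * sin θ)) := fun θ => by
    rw [cos_two_mul, cos_sq']
    field_simp
    ring
  simp_rw [hpt]
  rw [intervalIntegral.integral_const_mul, intervalIntegral.integral_sub hlog hcos,
    integral_log_two_add_two_mul_sin]
  simp only [cos_zero, cos_pi, sin_zero, sin_pi] at h0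
  have hJ : ∫ θ in 0..π, cos (2 * θ) * log (2 + 2 * sin θ) = π / 2 - 2 := by linarith
  rw [hJ]
  have hπ := pi_ne_zero
  field_simp
  ring

lemma norm_im_eq_sqrt {q : ℍ[ℝ]} (hq : ‖q‖ = 1) : ‖q.im‖ = √(1 - q.re ^ 2) := by
  have h := norm_sq_eq_re_sq_add_norm_im_sq q
  rw [hq] at h
  rw [show 1 - q.re ^ 2 = ‖q.im‖ ^ 2 by linarith, Real.sqrt_sq (norm_nonneg _)]

lemma integral_log_two_add_two_mul_norm_im :
    ∫ q : Metric.sphere (0 : ℍ[ℝ]) 1, Real.log (2 + 2 * ‖(q : ℍ[ℝ]).im‖) / 2 ∂muH =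
      (1 + 2 * ∑' k : ℕ, (-1 : ℝ) ^ k / (2 * k + 1) ^ 2) / Real.pi - 1 / 4 := by
  have hpt : ∀ q : Metric.sphere (0 : ℍ[ℝ]) 1, Real.log (2 + 2 * ‖(q : ℍ[ℝ]).im‖) / 2 =
      Real.log (2 + 2 * √(1 - (q : ℍ[ℝ]).re ^ 2)) / 2 := fun q => by
    rw [norm_im_eq_sqrt (by simp)]
  simp_rw [hpt]
  rw [integral_re_muH (F := fun x => Real.log (2 + 2 * √(1 - x ^ 2)) / 2) (by fun_prop),
    ← integral_sin_sq_mul_log]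
  refine intervalIntegral.integral_congr fun θ hθ => ?_
  rw [Set.uIcc_of_le Real.pi_pos.le] at hθ
  have hs := Real.sin_nonneg_of_nonneg_of_le_pi hθ.1 hθ.2
  rw [← Real.sin_sq, Real.sqrt_sq hs]

lemma integrable_log_re :
    Integrable (fun q : Metric.sphere (0 : ℍ[ℝ]) 1 => Real.log (q : ℍ[ℝ]).re) muH := by
  rw [integrable_re_muH_iff Real.measurable_log]
  have h : IntervalIntegrable (fun θ => 2 / Real.pi * Real.sin θ ^ 2 * Real.log (Real.cos θ))
      volume 0 Real.pi :=
    intervalIntegrable_log_cos.continuousOn_mul (by fun_prop)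
  exact (intervalIntegrable_iff_integrableOn_Ioo_of_le Real.pi_pos.le).1 h

lemma ae_re_ne_zero : ∀ᵐ q : Metric.sphere (0 : ℍ[ℝ]) 1 ∂muH, (q : ℍ[ℝ]).re ≠ 0 := by
  have hre : Measurable fun q : Metric.sphere (0 : ℍ[ℝ]) 1 => (q : ℍ[ℝ]).re :=
    (Quaternion.continuous_re.comp continuous_subtype_val).measurable
  refine ae_of_ae_map hre.aemeasurable (p := fun x => x ≠ 0) ?_
  rw [map_re_muH, ae_map_iff (p := fun x : ℝ => x ≠ 0) (by fun_prop)
    (show MeasurableSet {x : ℝ | x ≠ 0} from (measurableSet_singleton (0 : ℝ)).compl)]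
  refine (withDensity_absolutelyContinuous _ _).ae_le ?_
  have hne : ∀ᵐ θ : ℝ ∂volume.restrict (Set.Ioo 0 Real.pi), θ ≠ Real.pi / 2 :=
    ae_restrict_of_ae (Measure.ae_ne volume _)
  filter_upwards [hne, ae_restrict_mem measurableSet_Ioo] with θ hθ hmem h0
  exact hθ (Real.injOn_cos ⟨hmem.1.le, hmem.2.le⟩
    ⟨by positivity, by linarith [Real.pi_pos]⟩ (by rw [h0, Real.cos_pi_div_two]))

/-- The unit quaternion `-j`. -/
noncomputable def negJ : Metric.sphere (0 : ℍ[ℝ]) 1 :=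
  ⟨-qJ, by
    have h : ‖qJ‖ * ‖qJ‖ = 1 := by
      rw [← Quaternion.normSq_eq_norm_mul_self, Quaternion.normSq_def']; simp [qJ]
    rw [mem_sphere_zero_iff_norm, norm_neg]
    nlinarith [norm_nonneg qJ]⟩

lemma re_negJ_mul (q : Metric.sphere (0 : ℍ[ℝ]) 1) :
    ((negJ * q : Metric.sphere (0 : ℍ[ℝ]) 1) : ℍ[ℝ]).re = (q : ℍ[ℝ]).imJ := by
  have h0 : qJ.re = 0 := rfl
  have h1 : qJ.imI = 0 := rfl
  have h2 : qJ.imJ = 1 := rfl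
  have h3 : qJ.imK = 0 := rfl
  rw [Metric.unitSphere.coe_mul]
  simp [negJ, h0, h1, h2, h3]

lemma integrable_log_imJ :
    Integrable (fun q : Metric.sphere (0 : ℍ[ℝ]) 1 => Real.log (q : ℍ[ℝ]).imJ) muH := by
  simpa only [re_negJ_mul] using integrable_log_re.comp_mul_left negJ

lemma ae_imJ_ne_zero : ∀ᵐ q : Metric.sphere (0 : ℍ[ℝ]) 1 ∂muH, (q : ℍ[ℝ]).imJ ≠ 0 := by
  have h := (measurePreserving_mul_left muH negJ).quasiMeasurePreserving.ae ae_re_ne_zero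
  simpa only [re_negJ_mul] using h

lemma abs_log_norm_starPow_sub_le {q : ℍ[ℝ]} (hq : ‖q‖ = 1) (hJ : q.imJ ≠ 0) (n : ℕ) :
    |Real.log ‖starPow n q‖ - n * (Real.log (2 + 2 * ‖q.im‖) / 2)| ≤
      Real.log 2 - Real.log q.imJ := by
  have hP : 0 < 2 + 2 * ‖q.im‖ := by positivity
  have hJ2 : 0 < (q.imJ / 2) ^ 2 := by positivity
  have hlow := le_norm_starPow_sq hq n
  have hup := norm_starPow_sq_le hq n
  have hpos : 0 < ‖starPow n q‖ ^ 2 := lt_of_lt_of_le (by positivity) hlow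
  have h1 := Real.log_le_log (by positivity) hlow
  have h2 := Real.log_le_log hpos hup
  rw [Real.log_mul hJ2.ne' (by positivity), Real.log_pow, Real.log_pow, Real.log_pow,
    Real.log_div hJ two_ne_zero] at h1
  rw [Real.log_pow, Real.log_pow] at h2
  push_cast at h1 h2
  have h0 : 0 ≤ Real.log 2 - Real.log q.imJ := by nlinarith
  rw [abs_le]
  constructor <;> nlinarith

lemma continuous_starPow (n : ℕ) : Continuous (starPow n) :=
  continuous_finsetSum _ fun k _ =>
    (continuous_const.mul (continuous_id.pow k)).mul continuous_const

lemma integrable_log_two_add_two_mul_norm_im :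
    Integrable (fun q : Metric.sphere (0 : ℍ[ℝ]) 1 =>
      Real.log (2 + 2 * ‖(q : ℍ[ℝ]).im‖) / 2) muH := by
  have him : Continuous fun q : Metric.sphere (0 : ℍ[ℝ]) 1 => ‖(q : ℍ[ℝ]).im‖ :=
    (Quaternion.continuous_im.comp continuous_subtype_val).norm
  have hm : Measurable fun q : Metric.sphere (0 : ℍ[ℝ]) 1 =>
      Real.log (2 + 2 * ‖(q : ℍ[ℝ]).im‖) / 2 :=
    (Real.measurable_log.comp ((him.measurable.const_mul 2).const_add 2)).div_const 2
  refine Integrable.of_bound hm.aestronglyMeasurable (Real.log 4 / 2) (ae_of_all _ fun q => ?_)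
  have h := norm_sq_eq_re_sq_add_norm_im_sq (q : ℍ[ℝ])
  have hq : ‖(q : ℍ[ℝ])‖ = 1 := by simp
  have h0 := norm_nonneg (q : ℍ[ℝ]).im
  rw [hq] at h
  have h1 : ‖(q : ℍ[ℝ]).im‖ ≤ 1 := by nlinarith [sq_nonneg (q : ℍ[ℝ]).re]
  have h2 : 0 ≤ Real.log (2 + 2 * ‖(q : ℍ[ℝ]).im‖) := Real.log_nonneg (by linarith)
  rw [Real.norm_of_nonneg (by positivity)]
  gcongr
  linarith

lemma integrable_log_norm_starPow (n : ℕ) :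
    Integrable (fun q : Metric.sphere (0 : ℍ[ℝ]) 1 => Real.log ‖starPow n q‖) muH := by
  have hm : AEStronglyMeasurable
      (fun q : Metric.sphere (0 : ℍ[ℝ]) 1 => Real.log ‖starPow n q‖ -
        n * (Real.log (2 + 2 * ‖(q : ℍ[ℝ]).im‖) / 2)) muH := by
    refine AEStronglyMeasurable.sub (Measurable.aestronglyMeasurable ?_)
      (integrable_log_two_add_two_mul_norm_im.const_mul _).aestronglyMeasurable
    exact Real.measurable_log.comp
      ((continuous_starPow n).comp continuous_subtype_val).norm.measurable
  have h : Integrable (fun q : Metric.sphere (0 : ℍ[ℝ]) 1 => Real.log ‖starPow n q‖ -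
      n * (Real.log (2 + 2 * ‖(q : ℍ[ℝ]).im‖) / 2)) muH := by
    refine ((integrable_const (Real.log 2)).sub integrable_log_imJ).mono' hm ?_
    filter_upwards [ae_imJ_ne_zero] with q hq
    exact abs_log_norm_starPow_sub_le (by simp) hq n
  exact (h.add (integrable_log_two_add_two_mul_norm_im.const_mul n)).congr
    (ae_of_all _ fun q => by simp)

lemma abs_mahlerH_starPow_sub_le (n : ℕ) :
    |mahlerH (starPow n) -
      n * ∫ q : Metric.sphere (0 : ℍ[ℝ]) 1, Real.log (2 + 2 * ‖(q : ℍ[ℝ]).im‖) / 2 ∂muH| ≤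
      ∫ q : Metric.sphere (0 : ℍ[ℝ]) 1, (Real.log 2 - Real.log (q : ℍ[ℝ]).imJ) ∂muH := by
  rw [mahlerH, ← integral_const_mul, ← integral_sub (integrable_log_norm_starPow n)
    (integrable_log_two_add_two_mul_norm_im.const_mul _)]
  have hb : Integrable (fun q : Metric.sphere (0 : ℍ[ℝ]) 1 =>
      Real.log 2 - Real.log (q : ℍ[ℝ]).imJ) muH :=
    (integrable_const (Real.log 2)).sub integrable_log_imJ
  rw [← Real.norm_eq_abs]
  refine norm_integral_le_of_norm_le hb ?_
  filter_upwards [ae_imJ_ne_zero] with q hq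
  exact abs_log_norm_starPow_sub_le (by simp) hq n

/-- asymptotics of `m_ℍ((x - i)^{∗n})/n` in terms of Catalan's constant. -/
theorem mahlerH_star_pow_sub_i_asymptotic (G : ℝ)
    (hG : G = ∑' k : ℕ, (-1 : ℝ) ^ k / (2 * k + 1) ^ 2) :
    Filter.Tendsto (fun n : ℕ =>
        mahlerH (fun q => ∑ k ∈ Finset.range (n + 1),
          (n.choose k : Quaternion ℝ) * q ^ k * (-qI) ^ (n - k)) / n)
      Filter.atTop (nhds ((1 + 2 * G) / Real.pi - 1 / 4)) := by
  change Filter.Tendsto (fun n : ℕ => mahlerH (starPow n) / n) _ _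
  rw [hG, ← integral_log_two_add_two_mul_norm_im, tendsto_iff_norm_sub_tendsto_zero]
  refine squeeze_zero' (Filter.Eventually.of_forall fun n => norm_nonneg _) ?_
    (tendsto_const_div_atTop_nhds_zero_nat
      (∫ q : Metric.sphere (0 : ℍ[ℝ]) 1, (Real.log 2 - Real.log (q : ℍ[ℝ]).imJ) ∂muH))
  filter_upwards [Filter.eventually_gt_atTop 0] with n hn
  have hn' : (0 : ℝ) < n := Nat.cast_pos.2 hn
  rw [le_div_iff₀ hn', Real.norm_eq_abs, ← abs_of_pos hn', ← abs_mul, abs_of_pos hn', sub_mul,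
    div_mul_cancel₀ _ hn'.ne', mul_comm _ (n : ℝ)]
  exact abs_mahlerH_starPow_sub_le n
end

section
/- Let a, b ∈ ℍ with Im a ≠ 0 and Im b ≠ 0, and let L(q) = aq + qb. Set λ⁺ = (Re a + Re b)² + (|Im a| + |Im b|)² and λ⁻ = (Re a + Re b)² + (|Im a| − |Im b|)², so λ⁺ > λ⁻ ≥ 0. Then, with the convention 0·log 0 = 0, m_ℍ(L) = (1/2)·((λ⁺·log λ⁺ − λ⁻·log λ⁻)/(λ⁺ − λ⁻) − 1). -/
open MeasureTheory Quaternion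

instance inst_s8 : IsProbabilityMeasure muH :=
  ⟨by simpa [muH] using
    Measure.haarMeasure_self (G := Metric.sphere (0 : Quaternion ℝ) 1) (K₀ := ⊤)⟩

instance inst_s8_2 : muH.IsMulLeftInvariant := by
  unfold muH
  infer_instance

/-- Finite measures carried by a compact interval are determined by their moments. -/
theorem measure_eq_of_moments_eq {μ ν : Measure ℝ} [IsFiniteMeasure μ] [IsFiniteMeasure ν]
    {a b : ℝ} (hμ : ∀ᵐ x ∂μ, x ∈ Set.Icc a b) (hν : ∀ᵐ x ∂ν, x ∈ Set.Icc a b)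
    (h : ∀ n : ℕ, ∫ x, x ^ n ∂μ = ∫ x, x ^ n ∂ν) : μ = ν := by
  have integrable_of_continuous : ∀ (ρ : Measure ℝ) [IsFiniteMeasure ρ],
      (∀ᵐ x ∂ρ, x ∈ Set.Icc a b) → ∀ g : ℝ → ℝ, Continuous g → Integrable g ρ := by
    intro ρ _ hρ g hg
    obtain ⟨C, hC⟩ := isCompact_Icc.exists_bound_of_continuousOn (s := Set.Icc a b) hg.continuousOn
    exact Integrable.of_bound hg.aestronglyMeasurable C (hρ.mono hC)
  have integral_eval : ∀ p : Polynomial ℝ, ∫ x, p.eval x ∂μ = ∫ x, p.eval x ∂ν := by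
    intro p
    simp only [Polynomial.eval_eq_sum_range]
    rw [integral_finsetSum, integral_finsetSum]
    · simp only [integral_const_mul, h]
    · exact fun i _ => integrable_of_continuous ν hν _ (by fun_prop)
    · exact fun i _ => integrable_of_continuous μ hμ _ (by fun_prop)
  refine ext_of_forall_integral_eq_of_IsFiniteMeasure fun f => ?_
  have integral_near : ∀ (ρ : Measure ℝ) [IsFiniteMeasure ρ], (∀ᵐ x ∂ρ, x ∈ Set.Icc a b) →
      ∀ (p : Polynomial ℝ) (ε : ℝ), (∀ x ∈ Set.Icc a b, |p.eval x - f x| < ε) →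
      |∫ x, p.eval x ∂ρ - ∫ x, f x ∂ρ| ≤ ε * ρ.real Set.univ := by
    intro ρ _ hρ p ε hp
    rw [← integral_sub (integrable_of_continuous ρ hρ _ p.continuous)
      (integrable_of_continuous ρ hρ _ f.continuous)]
    exact norm_integral_le_of_norm_le_const (f := fun x => p.eval x - f x)
      (hρ.mono fun x hx => (hp x hx).le)
  have key : ∀ ε > 0, |∫ x, f x ∂μ - ∫ x, f x ∂ν| ≤
      ε * (μ.real Set.univ + ν.real Set.univ) := by
    intro ε hε
    obtain ⟨p, hp⟩ := exists_polynomial_near_of_continuousOn a b f f.continuous.continuousOn ε hε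
    have h1 := abs_le.1 (integral_near μ hμ p ε hp)
    have h2 := abs_le.1 (integral_near ν hν p ε hp)
    rw [integral_eval p] at h1
    exact abs_le.2 ⟨by linarith, by linarith⟩
  have lim : Filter.Tendsto (fun ε : ℝ => ε * (μ.real Set.univ + ν.real Set.univ))
      (nhdsWithin 0 (Set.Ioi 0)) (nhds 0) := by
    have : Continuous fun ε : ℝ => ε * (μ.real Set.univ + ν.real Set.univ) := by fun_prop
    simpa using (this.tendsto 0).mono_left nhdsWithin_le_nhds
  have := ge_of_tendsto lim (Filter.eventually_of_mem self_mem_nhdsWithin fun ε hε => key ε hε)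
  exact sub_eq_zero.1 (abs_nonpos_iff.1 this)

/-- If left translations rotate the pair `(f, g)` of bounded functions, then
`𝔼[f ^ (n + 1)] = n 𝔼[f ^ (n - 1) g ^ 2]`. -/
theorem integral_pow_succ_of_rotation {G : Type*} [Group G] [MeasurableSpace G] [MeasurableMul G]
    {μ : Measure G} [IsFiniteMeasure μ] [μ.IsMulLeftInvariant] {f g : G → ℝ}
    (hfm : Measurable f) (hgm : Measurable g)
    (hf : ∀ q, |f q| ≤ 1) (hg : ∀ q, |g q| ≤ 1) (p : ℝ → G)
    (hpf : ∀ t q, f (p t * q) = Real.cos t * f q - Real.sin t * g q)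
    (hpg : ∀ t q, g (p t * q) = Real.sin t * f q + Real.cos t * g q) (n : ℕ) :
    ∫ q, f q ^ (n + 1) ∂μ = n * ∫ q, f q ^ (n - 1) * g q ^ 2 ∂μ := by
  have bound_pow : ∀ (q : G) (k : ℕ), |f q| ^ k ≤ 1 := fun q k => pow_le_one₀ (abs_nonneg _) (hf q)
  have bound_sq : ∀ q : G, |g q| ^ 2 ≤ 1 := fun q => pow_le_one₀ (abs_nonneg _) (hg q)
  have hp0f : ∀ q, f (p 0 * q) = f q := by simp [hpf]
  have hp0g : ∀ q, g (p 0 * q) = g q := by simp [hpg]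
  have int_succ : Integrable (fun q => f q ^ (n + 1)) μ :=
    Integrable.of_bound (by fun_prop) 1 (.of_forall fun q => by simpa using bound_pow q (n + 1))
  have int_mul : Integrable (fun q => f q ^ (n - 1) * g q ^ 2) μ :=
    Integrable.of_bound (by fun_prop) 1 (.of_forall fun q => by
      simpa only [norm_mul, norm_pow, Real.norm_eq_abs] using
        mul_le_one₀ (bound_pow q _) (by positivity) (bound_sq q))
  have int_prod : Integrable (fun q => g q * f q ^ n) μ :=
    Integrable.of_bound (by fun_prop) 1 (.of_forall fun q => by
      simpa only [norm_mul, norm_pow, Real.norm_eq_abs] using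
        mul_le_one₀ (hg q) (by positivity) (bound_pow q n))
  have hder := (hasDerivAt_integral_of_dominated_loc_of_deriv_le (μ := μ) (s := Set.univ)
    (F := fun t q => g (p t * q) * f (p t * q) ^ n) (x₀ := (0 : ℝ))
    (F' := fun t q => f (p t * q) ^ (n + 1) - n * (f (p t * q) ^ (n - 1) * g (p t * q) ^ 2))
    (bound := fun _ => 1 + n * 1) Filter.univ_mem
    (.of_forall fun t => by
      have := measurable_const_mul (p t)
      exact ((hgm.comp this).mul ((hfm.comp this).pow_const n)).aestronglyMeasurable)
    (by simpa only [hp0f, hp0g] using int_prod)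
    (by
      simp only [hp0f, hp0g]
      exact (int_succ.sub (int_mul.const_mul n)).aestronglyMeasurable)
    (.of_forall fun q t _ => by
      refine (norm_sub_le _ _).trans ?_
      simp only [norm_mul, norm_pow, Real.norm_eq_abs, Nat.abs_cast]
      gcongr
      · exact bound_pow _ _
      · exact mul_le_one₀ (bound_pow _ _) (by positivity) (bound_sq _))
    (integrable_const _)
    (.of_forall fun q t _ => by
      have hcos : HasDerivAt (fun t => f (p t * q)) (-g (p t * q)) t := by
        simp only [hpf, hpg]
        exact (((Real.hasDerivAt_cos t).mul_const (f q)).sub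
          ((Real.hasDerivAt_sin t).mul_const (g q))).congr_deriv (by ring)
      have hsin : HasDerivAt (fun t => g (p t * q)) (f (p t * q)) t := by
        simp only [hpf, hpg]
        exact (((Real.hasDerivAt_sin t).mul_const (f q)).add
          ((Real.hasDerivAt_cos t).mul_const (g q))).congr_deriv (by ring)
      exact (hsin.mul (hcos.pow n)).congr_deriv (by simp only [Pi.pow_apply]; ring))).2
  have hconst : ∀ t, ∫ q, g (p t * q) * f (p t * q) ^ n ∂μ = ∫ q, g q * f q ^ n ∂μ := fun t =>
    integral_mul_left_eq_self (fun q => g q * f q ^ n) (p t)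
  simp only [hconst, hp0f, hp0g] at hder
  have hzero := hder.unique (hasDerivAt_const (0 : ℝ) _)
  rw [integral_sub int_succ (int_mul.const_mul _), integral_const_mul] at hzero
  linarith

/-- The quaternion with the given coordinates. -/
def quat (r x y z : ℝ) : ℍ[ℝ] := ⟨r, x, y, z⟩

@[simp] theorem re_quat (r x y z : ℝ) : (quat r x y z).re = r := rfl
@[simp] theorem imI_quat (r x y z : ℝ) : (quat r x y z).imI = x := rfl
@[simp] theorem imJ_quat (r x y z : ℝ) : (quat r x y z).imJ = y := rfl
@[simp] theorem imK_quat (r x y z : ℝ) : (quat r x y z).imK = z := rfl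

/-- The rotation of `v` by the unit quaternion `q`. -/
noncomputable def conjBy (v : ℍ[ℝ]) (q : Metric.sphere (0 : ℍ[ℝ]) 1) : ℍ[ℝ] :=
  q * v * star (q : ℍ[ℝ])

theorem continuous_conjBy (v : ℍ[ℝ]) : Continuous (conjBy v) := by
  unfold conjBy
  fun_prop

theorem normSq_coe_sphere (q : Metric.sphere (0 : ℍ[ℝ]) 1) : normSq (q : ℍ[ℝ]) = 1 := by
  rw [normSq_eq_norm_mul_self, norm_eq_of_mem_sphere q, one_mul]

theorem re_conjBy {v : ℍ[ℝ]} (hv : v.re = 0) (q : Metric.sphere (0 : ℍ[ℝ]) 1) :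
    (conjBy v q).re = 0 := by
  simp [conjBy, hv]
  ring

theorem normSq_conjBy (v : ℍ[ℝ]) (q : Metric.sphere (0 : ℍ[ℝ]) 1) :
    normSq (conjBy v q) = normSq v := by
  simp [conjBy, normSq_coe_sphere]

theorem sum_sq_conjBy {v : ℍ[ℝ]} (hv : v.re = 0) (hv1 : normSq v = 1)
    (q : Metric.sphere (0 : ℍ[ℝ]) 1) :
    (conjBy v q).imI ^ 2 + (conjBy v q).imJ ^ 2 + (conjBy v q).imK ^ 2 = 1 := by
  have h := normSq_conjBy v q
  rw [normSq_def', re_conjBy hv, hv1] at h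
  linarith

theorem conjBy_mul (v : ℍ[ℝ]) (p q : Metric.sphere (0 : ℍ[ℝ]) 1) :
    conjBy v (p * q) = p * conjBy v q * star (p : ℍ[ℝ]) := by
  simp [conjBy, mul_assoc]

/-- The one-parameter group of unit quaternions rotating `i` towards `j`. -/
noncomputable def rotIJ (t : ℝ) : Metric.sphere (0 : ℍ[ℝ]) 1 :=
  ⟨quat (Real.cos (t / 2)) 0 0 (Real.sin (t / 2)), by
    rw [mem_sphere_zero_iff_norm, ← sq_eq_sq₀ (norm_nonneg _) zero_le_one, sq,
      ← normSq_eq_norm_mul_self, normSq_def']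
    simp⟩

/-- The one-parameter group of unit quaternions rotating `i` towards `k`. -/
noncomputable def rotIK (t : ℝ) : Metric.sphere (0 : ℍ[ℝ]) 1 :=
  ⟨quat (Real.cos (t / 2)) 0 (-Real.sin (t / 2)) 0, by
    rw [mem_sphere_zero_iff_norm, ← sq_eq_sq₀ (norm_nonneg _) zero_le_one, sq,
      ← normSq_eq_norm_mul_self, normSq_def']
    simp⟩

theorem cos_eq_half (t : ℝ) : Real.cos t = Real.cos (t / 2) ^ 2 - Real.sin (t / 2) ^ 2 := by
  rw [← Real.cos_two_mul', mul_div_cancel₀ t two_ne_zero]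

theorem sin_eq_half (t : ℝ) : Real.sin t = 2 * Real.sin (t / 2) * Real.cos (t / 2) := by
  rw [← Real.sin_two_mul, mul_div_cancel₀ t two_ne_zero]

/-- **Archimedes' hat-box theorem** for moments: the moments of a coordinate of a Haar-random
rotation of a unit imaginary quaternion. -/
theorem integral_imI_conjBy_pow {v : ℍ[ℝ]} (hv : v.re = 0) (hv1 : normSq v = 1) (n : ℕ) :
    ∫ q, (conjBy v q).imI ^ n ∂muH = (1 / 2) * ((1 - (-1) ^ (n + 1)) / (n + 1)) := by
  have hsum := sum_sq_conjBy hv hv1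
  have mI : Measurable fun q => (conjBy v q).imI :=
    (continuous_imI.comp (continuous_conjBy v)).measurable
  have mJ : Measurable fun q => (conjBy v q).imJ :=
    (continuous_imJ.comp (continuous_conjBy v)).measurable
  have mK : Measurable fun q => (conjBy v q).imK :=
    (continuous_imK.comp (continuous_conjBy v)).measurable
  have bI : ∀ q, |(conjBy v q).imI| ≤ 1 := fun q => by
    rw [← sq_le_one_iff_abs_le_one]
    nlinarith [hsum q, sq_nonneg (conjBy v q).imJ, sq_nonneg (conjBy v q).imK]
  have bJ : ∀ q, |(conjBy v q).imJ| ≤ 1 := fun q => by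
    rw [← sq_le_one_iff_abs_le_one]
    nlinarith [hsum q, sq_nonneg (conjBy v q).imI, sq_nonneg (conjBy v q).imK]
  have bK : ∀ q, |(conjBy v q).imK| ≤ 1 := fun q => by
    rw [← sq_le_one_iff_abs_le_one]
    nlinarith [hsum q, sq_nonneg (conjBy v q).imI, sq_nonneg (conjBy v q).imJ]
  have recJ := integral_pow_succ_of_rotation (μ := muH) mI mJ bI bJ rotIJ
    (fun t q => by simp [conjBy_mul, rotIJ, cos_eq_half t, sin_eq_half t]; ring)
    (fun t q => by simp [conjBy_mul, rotIJ, cos_eq_half t, sin_eq_half t]; ring)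
  have recK := integral_pow_succ_of_rotation (μ := muH) mI mK bI bK rotIK
    (fun t q => by simp [conjBy_mul, rotIK, cos_eq_half t, sin_eq_half t]; ring)
    (fun t q => by simp [conjBy_mul, rotIK, cos_eq_half t, sin_eq_half t]; ring)
  have int_of_continuous : ∀ f : Metric.sphere (0 : ℍ[ℝ]) 1 → ℝ, Continuous f →
      Integrable f muH := fun f hf => hf.integrable_of_hasCompactSupport (.of_compactSpace f)
  have cI : Continuous fun q => (conjBy v q).imI :=
    continuous_imI.comp (continuous_conjBy v)
  have cJ : Continuous fun q => (conjBy v q).imJ :=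
    continuous_imJ.comp (continuous_conjBy v)
  have cK : Continuous fun q => (conjBy v q).imK :=
    continuous_imK.comp (continuous_conjBy v)
  induction n using Nat.twoStepInduction with
  | zero => norm_num
  | one => simpa using recJ 0
  | more k ih _ =>
    have hJ := recJ (k + 1)
    have hK := recK (k + 1)
    have hadd : ∫ q, (conjBy v q).imI ^ k * (conjBy v q).imJ ^ 2 ∂muH
        + ∫ q, (conjBy v q).imI ^ k * (conjBy v q).imK ^ 2 ∂muH
        = ∫ q, (conjBy v q).imI ^ k ∂muH - ∫ q, (conjBy v q).imI ^ (k + 2) ∂muH := by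
      have hL := integral_add (int_of_continuous _ ((cI.pow k).mul (cJ.pow 2)))
        (int_of_continuous _ ((cI.pow k).mul (cK.pow 2)))
      have hR := integral_sub (int_of_continuous _ (cI.pow k)) (int_of_continuous _ (cI.pow (k + 2)))
      refine hL.symm.trans (Eq.trans ?_ hR)
      congr 1 with q
      change (conjBy v q).imI ^ k * (conjBy v q).imJ ^ 2
        + (conjBy v q).imI ^ k * (conjBy v q).imK ^ 2 =
        (conjBy v q).imI ^ k - (conjBy v q).imI ^ (k + 2)
      linear_combination (conjBy v q).imI ^ k * hsum q
    simp only [Nat.add_sub_cancel, Nat.cast_add, Nat.cast_one] at hJ hK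
    rw [ih] at hadd
    have hk : (k : ℝ) + 1 ≠ 0 := by positivity
    have hk3 : (k : ℝ) + 2 + 1 ≠ 0 := by positivity
    have hrec : ((k : ℝ) + 2 + 1) * ∫ q, (conjBy v q).imI ^ (k + 2) ∂muH
        = ((k : ℝ) + 1) * (1 / 2 * ((1 - (-1) ^ (k + 1)) / (k + 1))) := by
      linear_combination hJ + hK + ((k : ℝ) + 1) * hadd
    push_cast
    rw [← mul_right_inj' hk3, hrec]
    field_simp
    ring

/-- **Archimedes' hat-box theorem**: a coordinate of a Haar-random rotation of a unit imaginary
quaternion is uniformly distributed on `[-1, 1]`. -/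
theorem map_imI_conjBy {v : ℍ[ℝ]} (hv : v.re = 0) (hv1 : normSq v = 1) :
    muH.map (fun q => (conjBy v q).imI) =
      ENNReal.ofReal (1 / 2) • volume.restrict (Set.Icc (-1 : ℝ) 1) := by
  have mI : Measurable fun q => (conjBy v q).imI :=
    (continuous_imI.comp (continuous_conjBy v)).measurable
  have : IsFiniteMeasure (ENNReal.ofReal (1 / 2) • volume.restrict (Set.Icc (-1 : ℝ) 1)) :=
    Measure.smul_finite _ ENNReal.ofReal_ne_top
  refine measure_eq_of_moments_eq (a := -1) (b := 1) ?_ ?_ fun n => ?_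
  · refine (ae_map_iff mI.aemeasurable measurableSet_Icc).2 ?_
    refine .of_forall fun q => abs_le.1 ?_
    rw [← sq_le_one_iff_abs_le_one]
    nlinarith [sum_sq_conjBy hv hv1 q, sq_nonneg (conjBy v q).imJ, sq_nonneg (conjBy v q).imK]
  · exact Measure.ae_smul_measure (ae_restrict_mem measurableSet_Icc) _
  · rw [integral_map mI.aemeasurable (by fun_prop), integral_imI_conjBy_pow hv hv1,
      integral_smul_measure, integral_Icc_eq_integral_Ioc,
      ← intervalIntegral.integral_of_le (by norm_num), integral_pow]
    simp

/-- Every quaternion is conjugate by a unit quaternion to an element of `ℝ + ℝ i`. -/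
theorem exists_sphere_mul_eq (a : ℍ[ℝ]) : ∃ p : Metric.sphere (0 : ℍ[ℝ]) 1,
    a * p = p * quat a.re ‖a.im‖ 0 0 := by
  suffices h : ∃ p : ℍ[ℝ], p ≠ 0 ∧ a * p = p * quat a.re ‖a.im‖ 0 0 by
    obtain ⟨p, hp, h⟩ := h
    refine ⟨⟨(‖p‖⁻¹ : ℝ) • p, ?_⟩, ?_⟩
    · rw [mem_sphere_zero_iff_norm, norm_smul, norm_inv, norm_norm,
        inv_mul_cancel₀ (norm_ne_zero_iff.2 hp)]
    · simp only [mul_smul_comm, smul_mul_assoc, h]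
  have hr : ‖a.im‖ * ‖a.im‖ = a.imI ^ 2 + a.imJ ^ 2 + a.imK ^ 2 := by
    rw [← normSq_eq_norm_mul_self, normSq_def']
    simp
  by_cases h0 : quat (‖a.im‖ + a.imI) 0 (-a.imK) a.imJ = 0
  · have h1 : ‖a.im‖ + a.imI = 0 := congrArg QuaternionAlgebra.re h0
    have h2 : -a.imK = 0 := congrArg QuaternionAlgebra.imJ h0
    have h3 : a.imJ = 0 := congrArg QuaternionAlgebra.imK h0
    refine ⟨quat 0 0 1 0, fun h => one_ne_zero (congrArg QuaternionAlgebra.imJ h), ?_⟩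
    ext <;> simp <;> linarith
  · refine ⟨_, h0, ?_⟩
    ext <;> simp <;> first | linear_combination -hr | ring

theorem norm_mul_add_mul_sq (a b : ℍ[ℝ]) (r s : ℝ) (v : ℍ[ℝ]) (hv : v.re = 0)
    (hv1 : normSq v = 1) (hb : b = b.re + s • v) (p q : Metric.sphere (0 : ℍ[ℝ]) 1)
    (hp : a * p = p * quat a.re r 0 0) :
    ‖a * (p * q : Metric.sphere (0 : ℍ[ℝ]) 1) + (p * q : Metric.sphere (0 : ℍ[ℝ]) 1) * b‖ ^ 2 =
      (a.re + b.re) ^ 2 + r ^ 2 + s ^ 2 + 2 * r * s * (conjBy v q).imI := by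
  have hq : (q : ℍ[ℝ]) * star (q : ℍ[ℝ]) = 1 := by
    rw [self_mul_star, normSq_coe_sphere, coe_one]
  have hfac : (a * (p * q : Metric.sphere (0 : ℍ[ℝ]) 1)
      + (p * q : Metric.sphere (0 : ℍ[ℝ]) 1) * b) * star (q : ℍ[ℝ])
      = p * (quat a.re r 0 0 + (b.re + s • conjBy v q)) := by
    have hconj : (q : ℍ[ℝ]) * b * star (q : ℍ[ℝ]) = b.re + s • conjBy v q := by
      conv_lhs => rw [hb]
      rw [mul_add, add_mul, ← coe_commutes, mul_assoc, hq, mul_one]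
      simp [conjBy]
    rw [← hconj, Metric.unitSphere.coe_mul, add_mul, ← mul_assoc a, hp, mul_add]
    simp only [mul_assoc, hq, mul_one]
  have hnorm := congrArg normSq hfac
  simp only [map_mul, normSq_star, normSq_coe_sphere, mul_one, one_mul] at hnorm
  rw [sq, ← normSq_eq_norm_mul_self, hnorm, normSq_def']
  have hre := re_conjBy hv q
  have hsum := sum_sq_conjBy hv hv1 q
  simp [hre]
  linear_combination s ^ 2 * hsum

/-- Mahler measure of the Sylvester-form linear polynomial `ax + xb`. -/
theorem mahlerH_sylvester (a b : Quaternion ℝ) (ha : a.im ≠ 0) (hb : b.im ≠ 0)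
    (lp lm : ℝ)
    (hlp : lp = (a.re + b.re) ^ 2 + (‖a.im‖ + ‖b.im‖) ^ 2)
    (hlm : lm = (a.re + b.re) ^ 2 + (‖a.im‖ - ‖b.im‖) ^ 2) :
    mahlerH (fun q => a * q + q * b) =
      (1 / 2) * ((lp * Real.log lp - lm * Real.log lm) / (lp - lm) - 1) := by
  have hr : ‖a.im‖ ≠ 0 := norm_ne_zero_iff.2 ha
  have hs : ‖b.im‖ ≠ 0 := norm_ne_zero_iff.2 hb
  obtain ⟨p, hp⟩ := exists_sphere_mul_eq a
  set v : ℍ[ℝ] := ‖b.im‖⁻¹ • b.im with hvdef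
  have hv : v.re = 0 := by simp [hvdef]
  have hv1 : normSq v = 1 := by
    rw [normSq_eq_norm_mul_self, hvdef, norm_smul, norm_inv, norm_norm, inv_mul_cancel₀ hs, one_mul]
  have hbv : b = b.re + ‖b.im‖ • v := by
    rw [hvdef, smul_inv_smul₀ hs, re_add_im]
  have mI : Measurable fun q => (conjBy v q).imI :=
    (continuous_imI.comp (continuous_conjBy v)).measurable
  set A : ℝ := (a.re + b.re) ^ 2 + ‖a.im‖ ^ 2 + ‖b.im‖ ^ 2 with hA
  set B : ℝ := 2 * ‖a.im‖ * ‖b.im‖ with hB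
  have hB0 : B ≠ 0 := by simp [hB, hr, hs]
  have hlog : ∀ q : Metric.sphere (0 : ℍ[ℝ]) 1,
      Real.log ‖a * (p * q : Metric.sphere (0 : ℍ[ℝ]) 1)
        + (p * q : Metric.sphere (0 : ℍ[ℝ]) 1) * b‖
      = (1 / 2) * Real.log (A + B * (conjBy v q).imI) := fun q => by
    rw [hA, hB, ← norm_mul_add_mul_sq a b _ _ v hv hv1 hbv p q hp, Real.log_pow]
    push_cast
    ring
  have hplus : A + B * 1 = lp := by rw [hlp, hA, hB]; ring
  have hminus : A + B * -1 = lm := by rw [hlm, hA, hB]; ring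
  have hdiff : lp - lm = 2 * B := by rw [← hplus, ← hminus]; ring
  have mlog : Measurable fun x : ℝ => Real.log (A + B * x) := by fun_prop
  unfold mahlerH
  rw [← integral_mul_left_eq_self _ p]
  simp only [hlog]
  rw [integral_const_mul, ← integral_map (f := fun x : ℝ => Real.log (A + B * x))
      mI.aemeasurable mlog.aestronglyMeasurable, map_imI_conjBy hv hv1,
    integral_smul_measure, integral_Icc_eq_integral_Ioc,
    ← intervalIntegral.integral_of_le (by norm_num),
    intervalIntegral.integral_comp_add_mul Real.log hB0, integral_log, hplus, hminus, hdiff,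
    ENNReal.toReal_ofReal (by norm_num), smul_eq_mul, smul_eq_mul]
  field_simp
  linear_combination -hdiff
end

section
/- The two-variable quaternionic Mahler measure of 1 + x + y satisfies m_ℍ(1 + x + y) = 1/2 − 11√3/(16π) + (3√3/(4π))·L(χ₋₃, 2), where χ₋₃ is the nontrivial Dirichlet character modulo 3 (χ₋₃(n) = 1 if n ≡ 1 mod 3, −1 if n ≡ 2 mod 3, 0 if 3 | n) and L(χ₋₃, 2) = Σ_{n≥1} χ₋₃(n)/n². -/
open MeasureTheory Quaternion

/-- The two-variable quaternionic Mahler measure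
`m_ℍ(f) = ∫_{T¹(ℍ)×T¹(ℍ)} log |f(x,y)| d(μ⊗μ)(x,y)`. -/
noncomputable def mahlerH2 (f : Quaternion ℝ → Quaternion ℝ → Quaternion ℝ) : ℝ :=
  ∫ p : (Metric.sphere (0 : Quaternion ℝ) 1) × (Metric.sphere (0 : Quaternion ℝ) 1),
    Real.log ‖f p.1 p.2‖ ∂(muH.prod muH)

namespace UnitQuaternion

open Metric Set Real
open scoped ENNReal

/-- Spherical reduction of the lower integral of a radial function. -/
lemma lintegral_fun_norm_addHaar {E : Type*} [NormedAddCommGroup E] [NormedSpace ℝ E]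
    [FiniteDimensional ℝ E] [MeasurableSpace E] [BorelSpace E] [Nontrivial E]
    (μ : Measure E) [μ.IsAddHaarMeasure] {f : ℝ → ℝ≥0∞} (hf : Measurable f) :
    ∫⁻ x, f ‖x‖ ∂μ = μ.toSphere univ *
      ∫⁻ y in Ioi (0 : ℝ), ENNReal.ofReal (y ^ (Module.finrank ℝ E - 1)) * f y := by
  calc
    ∫⁻ x, f ‖x‖ ∂μ = ∫⁻ x : ({(0)}ᶜ : Set E), f (‖x.1‖) ∂(μ.comap (↑)) := by
      rw [lintegral_subtype_comap (measurableSet_singleton _).compl fun x ↦ f (‖x‖),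
        restrict_compl_singleton]
    _ = ∫⁻ x, f x.2 ∂μ.toSphere.prod (.volumeIoiPow (Module.finrank ℝ E - 1)) := by
      simpa using μ.measurePreserving_homeomorphUnitSphereProd.lintegral_comp_emb
        (Homeomorph.measurableEmbedding _) (f ∘ Subtype.val ∘ Prod.snd)
    _ = μ.toSphere univ *
        ∫⁻ x : Ioi (0 : ℝ), f x ∂.volumeIoiPow (Module.finrank ℝ E - 1) := by
      rw [lintegral_prod _ (by fun_prop)]
      simp [mul_comm]
    _ = _ := by
      rw [Measure.volumeIoiPow, lintegral_withDensity_eq_lintegral_mul _ (by fun_prop)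
        (by fun_prop)]
      congr 1
      exact lintegral_subtype_comap measurableSet_Ioi
        (fun y => ENNReal.ofReal (y ^ (Module.finrank ℝ E - 1)) * f y)

/-- Coordinates on the quaternions splitting off the real part. -/
noncomputable def reImEquiv : (ℝ × EuclideanSpace ℝ (Fin 3)) ≃L[ℝ] ℍ[ℝ] :=
  LinearEquiv.toContinuousLinearEquiv
    { toFun := fun p => ⟨p.1, p.2 0, p.2 1, p.2 2⟩
      invFun := fun q => (q.re, !₂[q.imI, q.imJ, q.imK])
      map_add' := fun p q => by ext <;> rfl
      map_smul' := fun c p => by ext <;> rfl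
      left_inv := fun p => by
        ext i
        · rfl
        · fin_cases i <;> rfl
      right_inv := fun q => by ext <;> rfl }

lemma re_reImEquiv (p : ℝ × EuclideanSpace ℝ (Fin 3)) : (reImEquiv p).re = p.1 := rfl

lemma norm_reImEquiv (p : ℝ × EuclideanSpace ℝ (Fin 3)) :
    ‖reImEquiv p‖ = √(p.1 ^ 2 + ‖p.2‖ ^ 2) := by
  rw [EuclideanSpace.norm_sq_eq, ← sqrt_sq (norm_nonneg (reImEquiv p)), sq ‖_‖,
    ← Quaternion.normSq_eq_norm_mul_self, Quaternion.normSq_def', Fin.sum_univ_three]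
  congr 1
  simp only [norm_eq_abs, sq_abs]
  change p.1 ^ 2 + p.2 0 ^ 2 + p.2 1 ^ 2 + p.2 2 ^ 2 = _
  ring

/-- The lower integral over the quaternions of a function of the real part and the norm. -/
lemma exists_lintegral_re_norm : ∃ c : ℝ≥0∞, ∀ H : ℝ → ℝ → ℝ≥0∞,
    Measurable (Function.uncurry H) →
    ∫⁻ q : ℍ[ℝ], H q.re ‖q‖ =
      c * ∫⁻ p in Ioi (0 : ℝ) ×ˢ Ioo 0 π,
        ENNReal.ofReal (p.1 ^ 3) * ENNReal.ofReal (sin p.2 ^ 2) * H (p.1 * cos p.2) p.1 := by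
  have : (volume : Measure (ℝ × EuclideanSpace ℝ (Fin 3))).IsAddHaarMeasure := by
    rw [Measure.volume_eq_prod]
    infer_instance
  have : (Measure.map reImEquiv volume).IsAddHaarMeasure :=
    reImEquiv.isAddHaarMeasure_map volume
  have hμ : (volume : Measure ℍ[ℝ]) = Measure.addHaarScalarFactor (volume : Measure ℍ[ℝ])
      (Measure.map reImEquiv volume) • Measure.map reImEquiv volume :=
    Measure.isAddLeftInvariant_eq_smul _ _
  generalize Measure.addHaarScalarFactor (volume : Measure ℍ[ℝ])
      (Measure.map reImEquiv volume) = k at hμ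
  refine ⟨k * (volume : Measure (EuclideanSpace ℝ (Fin 3))).toSphere univ, fun H hH => ?_⟩
  have hH' : ∀ {α : Type} [MeasurableSpace α] {f g : α → ℝ}, Measurable f → Measurable g →
      Measurable fun a => H (f a) (g a) := fun hf hg => hH.comp (hf.prodMk hg)
  have hS : MeasurableSet (Ioi (0 : ℝ) ×ˢ Ioo 0 π) := measurableSet_Ioi.prod measurableSet_Ioo
  rw [hμ, lintegral_smul_measure, lintegral_map
    (hH' Quaternion.continuous_re.measurable measurable_norm) reImEquiv.continuous.measurable]
  simp only [re_reImEquiv, norm_reImEquiv]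
  rw [Measure.volume_eq_prod, lintegral_prod _ (by
    refine (hH' ?_ ?_).aemeasurable <;> fun_prop)]
  have h3 : ∀ t : ℝ, ∫⁻ v : EuclideanSpace ℝ (Fin 3), H t √(t ^ 2 + ‖v‖ ^ 2) =
      (volume : Measure (EuclideanSpace ℝ (Fin 3))).toSphere univ *
      ∫⁻ s, (Ioi (0 : ℝ)).indicator
        (fun s => ENNReal.ofReal (s ^ 2) * H t √(t ^ 2 + s ^ 2)) s := fun t => by
    rw [lintegral_fun_norm_addHaar volume (f := fun s => H t √(t ^ 2 + s ^ 2))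
      (by refine hH' ?_ ?_ <;> fun_prop), lintegral_indicator measurableSet_Ioi]
    simp
  simp only [h3]
  have hm : Measurable fun p : ℝ × ℝ => (Ioi (0 : ℝ)).indicator
        (fun s => ENNReal.ofReal (s ^ 2) * H p.1 √(p.1 ^ 2 + s ^ 2)) p.2 := by
    have : (fun p : ℝ × ℝ => (Ioi (0 : ℝ)).indicator
        (fun s => ENNReal.ofReal (s ^ 2) * H p.1 √(p.1 ^ 2 + s ^ 2)) p.2) =
        (Prod.snd ⁻¹' Ioi (0 : ℝ)).indicator
          (fun p : ℝ × ℝ => ENNReal.ofReal (p.2 ^ 2) * H p.1 √(p.1 ^ 2 + p.2 ^ 2)) := by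
      ext p; simp [indicator]
    rw [this]
    refine Measurable.indicator (Measurable.mul (by fun_prop) (hH' ?_ ?_))
      (measurable_snd measurableSet_Ioi) <;> fun_prop
  rw [lintegral_const_mul _ (by exact hm.lintegral_prod_right'), ← lintegral_prod
    (fun p : ℝ × ℝ => (Ioi (0 : ℝ)).indicator
        (fun s => ENNReal.ofReal (s ^ 2) * H p.1 √(p.1 ^ 2 + s ^ 2)) p.2) hm.aemeasurable,
    ← Measure.volume_eq_prod, ← lintegral_comp_polarCoord_symm, ENNReal.smul_def, smul_eq_mul,
    ← mul_assoc]
  congr 1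
  rw [← lintegral_indicator polarCoord.open_target.measurableSet, ← lintegral_indicator hS]
  refine lintegral_congr fun p => ?_
  obtain ⟨r, θ⟩ := p
  by_cases hr : 0 < r
  swap
  · simp [indicator, polarCoord_target, hr]
  by_cases hθ : θ ∈ Ioo 0 π
  · have hs : 0 < sin θ := sin_pos_of_mem_Ioo hθ
    have h1 : -π < θ := by linarith [hθ.1, pi_pos]
    have h2 : √((r * cos θ) ^ 2 + (r * sin θ) ^ 2) = r := by
      rw [mul_pow, mul_pow, ← mul_add, cos_sq_add_sin_sq, mul_one, sqrt_sq hr.le]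
    rw [indicator_of_mem (by simpa [polarCoord_target, hr] using ⟨h1, hθ.2⟩),
      indicator_of_mem (show (r, θ) ∈ Ioi (0 : ℝ) ×ˢ Ioo 0 π from ⟨hr, hθ⟩)]
    simp only [polarCoord_symm_apply, smul_eq_mul]
    rw [indicator_of_mem (show r * sin θ ∈ Ioi 0 from mul_pos hr hs), h2, ← mul_assoc,
      ← ENNReal.ofReal_mul hr.le, ← ENNReal.ofReal_mul (by positivity)]
    congr 2
    ring
  · rw [indicator_of_notMem (s := Ioi (0 : ℝ) ×ˢ Ioo 0 π) (fun h => hθ h.2)]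
    by_cases hθ' : θ ∈ Ioo (-π) π
    · have hs : sin θ ≤ 0 := sin_nonpos_of_nonpos_of_neg_pi_le
        (by by_contra! h; exact hθ ⟨h, hθ'.2⟩) hθ'.1.le
      rw [indicator_of_mem (by simpa [polarCoord_target, hr] using hθ')]
      simp only [polarCoord_symm_apply, smul_eq_mul]
      rw [indicator_of_notMem (by
        simp only [mem_Ioi, not_lt]; exact mul_nonpos_of_nonneg_of_nonpos hr.le hs), mul_zero]
    · rw [indicator_of_notMem (by simpa [polarCoord_target, hr] using hθ')]

/-- Left multiplication by a unit quaternion as a linear isometry. -/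
noncomputable def mulLeftIsometry (g : sphere (0 : ℍ[ℝ]) 1) : ℍ[ℝ] ≃ₗᵢ[ℝ] ℍ[ℝ] :=
  LinearIsometry.toLinearIsometryEquiv
    { toLinearMap := LinearMap.mulLeft ℝ (g : ℍ[ℝ])
      norm_map' := fun q => by simp } rfl

open Classical in
/-- The radial projection to the unit sphere, sending `0` to `1`. -/
noncomputable def unitPart (q : ℍ[ℝ]) : sphere (0 : ℍ[ℝ]) 1 :=
  ⟨if q = 0 then 1 else ‖q‖⁻¹ • q, by
    split_ifs with h
    · simp
    · simp [norm_smul, h]⟩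

lemma coe_unitPart {q : ℍ[ℝ]} (hq : q ≠ 0) : (unitPart q : ℍ[ℝ]) = ‖q‖⁻¹ • q := by
  simp [unitPart, hq]

lemma measurable_unitPart : Measurable unitPart := by
  refine Measurable.subtype_mk (Measurable.ite (measurableSet_singleton 0) measurable_const ?_)
  exact measurable_norm.inv.smul measurable_id

lemma unitPart_mul (g : sphere (0 : ℍ[ℝ]) 1) {q : ℍ[ℝ]} (hq : q ≠ 0) :
    unitPart (g * q) = g * unitPart q := by
  have hg : (g : ℍ[ℝ]) ≠ 0 := ne_zero_of_mem_unit_sphere g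
  ext1
  rw [coe_unitPart (mul_ne_zero hg hq)]
  simp [coe_unitPart hq]

/-- The radial projection of Lebesgue measure on the unit ball. -/
noncomputable def projBall : Measure (sphere (0 : ℍ[ℝ]) 1) :=
  Measure.map unitPart (volume.restrict (ball 0 1))

instance : IsFiniteMeasure projBall := by
  have : IsFiniteMeasure ((volume : Measure ℍ[ℝ]).restrict (ball 0 1)) :=
    ⟨by simpa using measure_ball_lt_top⟩
  unfold projBall
  infer_instance

instance : projBall.IsMulLeftInvariant := by
  refine ⟨fun g => ?_⟩
  have hball : mulLeftIsometry g ⁻¹' ball 0 1 = ball 0 1 := by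
    ext q; simp
  have hpres := (mulLeftIsometry g).measurePreserving.restrict_preimage
    (measurableSet_ball (x := (0 : ℍ[ℝ])) (ε := 1))
  rw [hball] at hpres
  have hmul : Measurable fun x : sphere (0 : ℍ[ℝ]) 1 => g * x :=
    (continuous_const_mul g).measurable
  have hcongr : (fun x => g * x) ∘ unitPart =ᵐ[volume.restrict (ball 0 1)]
      unitPart ∘ mulLeftIsometry g := by
    refine ae_restrict_of_ae ?_
    filter_upwards [compl_mem_ae_iff.2 (measure_singleton (0 : ℍ[ℝ]))] with q hq
    exact (unitPart_mul g hq).symm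
  unfold projBall
  rw [Measure.map_map hmul measurable_unitPart, Measure.map_congr hcongr,
    ← Measure.map_map measurable_unitPart (mulLeftIsometry g).continuous.measurable, hpres.map_eq]

instance : IsProbabilityMeasure muH :=
  ⟨Measure.haarMeasure_self (K₀ := (⊤ : TopologicalSpace.PositiveCompacts _))⟩

instance : muH.IsMulLeftInvariant := by
  unfold muH; infer_instance

lemma exists_muH_eq_smul_projBall : ∃ c : ℝ≥0∞, muH = c • projBall := by
  have h := Measure.haarMeasure_unique projBall ⊤
  have huniv : projBall univ = volume (ball (0 : ℍ[ℝ]) 1) := by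
    rw [projBall, Measure.map_apply measurable_unitPart MeasurableSet.univ]
    simp
  have h0 : projBall univ ≠ 0 := by
    rw [huniv]; exact (measure_ball_pos volume (0 : ℍ[ℝ]) one_pos).ne'
  have htop : projBall univ ≠ ⊤ := measure_ne_top _ _
  refine ⟨(projBall univ)⁻¹, ?_⟩
  change projBall = projBall univ • muH at h
  conv_rhs => rw [h]
  simp only [Measure.smul_apply, smul_eq_mul, measure_univ, mul_one]
  rw [smul_smul, ENNReal.inv_mul_cancel h0 htop, one_smul]

lemma measurable_re_coe : Measurable fun q : sphere (0 : ℍ[ℝ]) 1 => (q : ℍ[ℝ]).re :=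
  (Quaternion.continuous_re.comp continuous_subtype_val).measurable

lemma exists_lintegral_re_muH : ∃ c : ℝ≥0∞, ∀ F : ℝ → ℝ≥0∞, Measurable F →
    ∫⁻ q, F (q : ℍ[ℝ]).re ∂muH =
      c * ∫⁻ θ in Ioo 0 π, ENNReal.ofReal (sin θ ^ 2) * F (cos θ) := by
  obtain ⟨a, ha⟩ := exists_muH_eq_smul_projBall
  obtain ⟨b, hb⟩ := exists_lintegral_re_norm
  refine ⟨a * b * ∫⁻ r in Ioi (0 : ℝ), (Iio 1).indicator (fun r => ENNReal.ofReal (r ^ 3)) r,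
    fun F hF => ?_⟩
  have hH : Measurable (Function.uncurry
      fun t r : ℝ => (Iio (1 : ℝ)).indicator (fun r => F (t / r)) r) := by
    have : (Function.uncurry fun t r : ℝ => (Iio (1 : ℝ)).indicator (fun r => F (t / r)) r) =
        (Prod.snd ⁻¹' Iio (1 : ℝ)).indicator fun p : ℝ × ℝ => F (p.1 / p.2) := by
      ext p; simp [indicator, Function.uncurry]
    rw [this]
    exact (hF.comp (measurable_fst.div measurable_snd)).indicator
      (measurable_snd measurableSet_Iio)
  have hball : ∫⁻ q, F (q : ℍ[ℝ]).re ∂projBall =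
      ∫⁻ q : ℍ[ℝ], (Iio (1 : ℝ)).indicator (fun r => F (q.re / r)) ‖q‖ := by
    rw [projBall, lintegral_map (f := fun q : sphere (0 : ℍ[ℝ]) 1 => F (q : ℍ[ℝ]).re)
        (hF.comp measurable_re_coe) measurable_unitPart,
      ← lintegral_indicator measurableSet_ball]
    refine lintegral_congr_ae ?_
    filter_upwards [compl_mem_ae_iff.2 (measure_singleton (0 : ℍ[ℝ]))] with q hq
    simp only [indicator, mem_ball_zero_iff, mem_Iio, coe_unitPart hq, Quaternion.re_smul,
      smul_eq_mul, inv_mul_eq_div]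
  rw [ha, lintegral_smul_measure, hball, hb _ hH, smul_eq_mul, ← mul_assoc, mul_assoc (a * b)]
  congr 1
  rw [← lintegral_prod_mul ?_ ?_, Measure.prod_restrict, ← Measure.volume_eq_prod]
  · refine setLIntegral_congr_fun (measurableSet_Ioi.prod measurableSet_Ioo) fun p hp => ?_
    have hp1 : p.1 ≠ 0 := (show (0 : ℝ) < p.1 from hp.1).ne'
    by_cases h1 : p.1 < 1
    · simp [h1, hp1, mul_assoc]
    · simp [h1]
  · refine Measurable.aemeasurable (Measurable.indicator ?_ measurableSet_Iio)
    fun_prop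
  · exact ((by fun_prop : Measurable fun θ : ℝ => ENNReal.ofReal (sin θ ^ 2)).mul
      (hF.comp measurable_cos)).aemeasurable

/-- The law of the angle of a random unit quaternion. -/
noncomputable def angleMeasure : Measure ℝ :=
  (volume.restrict (Ioo 0 π)).withDensity fun θ => ((2 / π * sin θ ^ 2).toNNReal : ℝ≥0∞)

lemma map_re_muH :
    Measure.map (fun q : sphere (0 : ℍ[ℝ]) 1 => (q : ℍ[ℝ]).re) muH =
      Measure.map cos angleMeasure := by
  obtain ⟨c, hc⟩ := exists_lintegral_re_muH
  have hsin : ∫⁻ θ in Ioo 0 π, ENNReal.ofReal (sin θ ^ 2) = ENNReal.ofReal (π / 2) := by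
    rw [← ofReal_integral_eq_lintegral_ofReal, ← integral_Ioc_eq_integral_Ioo,
      ← intervalIntegral.integral_of_le pi_pos.le, integral_sin_sq]
    · simp
    · exact (Continuous.integrableOn_Icc (by fun_prop)).mono_set Ioo_subset_Icc_self
    · exact ae_of_all _ fun θ => sq_nonneg _
  have hc1 : c = ENNReal.ofReal (2 / π) := by
    have h := hc (fun _ => 1) measurable_const
    simp only [lintegral_const, measure_univ, mul_one, hsin] at h
    have h2 : ENNReal.ofReal (π / 2) * ENNReal.ofReal (2 / π) = 1 := by
      rw [← ENNReal.ofReal_mul (by positivity)]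
      field_simp
      simp
    calc c = c * (ENNReal.ofReal (π / 2) * ENNReal.ofReal (2 / π)) := by rw [h2, mul_one]
      _ = _ := by rw [← mul_assoc, ← h, one_mul]
  refine Measure.ext_of_lintegral _ fun F hF => ?_
  rw [lintegral_map hF measurable_re_coe, lintegral_map hF measurable_cos, hc F hF, angleMeasure,
    lintegral_withDensity_eq_lintegral_mul _ (by fun_prop)
      (g := fun θ => F (cos θ)) (hF.comp measurable_cos),
    ← lintegral_const_mul (f := fun θ => ENNReal.ofReal (sin θ ^ 2) * F (cos θ)) _
      (((by fun_prop : Measurable fun θ : ℝ => ENNReal.ofReal (sin θ ^ 2)).mul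
        (hF.comp measurable_cos)))]
  refine lintegral_congr fun θ => ?_
  rw [hc1, ← mul_assoc, ← ENNReal.ofReal_mul (by positivity)]
  rfl

lemma integral_re_muH {F : ℝ → ℝ} (hF : Measurable F) :
    ∫ q, F (q : ℍ[ℝ]).re ∂muH = 2 / π * ∫ θ in 0..π, sin θ ^ 2 * F (cos θ) := by
  rw [← integral_map (f := F) measurable_re_coe.aemeasurable hF.aestronglyMeasurable, map_re_muH,
    integral_map measurable_cos.aemeasurable hF.aestronglyMeasurable, angleMeasure,
    integral_withDensity_eq_integral_smul (by fun_prop),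
    intervalIntegral.integral_of_le pi_pos.le, integral_Ioc_eq_integral_Ioo,
    ← integral_const_mul]
  refine integral_congr_ae (ae_of_all _ fun θ => ?_)
  have : 0 ≤ 2 / π * sin θ ^ 2 := by positivity
  simp [NNReal.smul_def, Real.coe_toNNReal _ this, mul_assoc]

lemma ae_re_ne (a : ℝ) : ∀ᵐ q : sphere (0 : ℍ[ℝ]) 1 ∂muH, (q : ℍ[ℝ]).re ≠ a := by
  refine ae_of_ae_map (p := fun t => t ≠ a) measurable_re_coe.aemeasurable ?_
  rw [map_re_muH, ae_map_iff (p := fun t => t ≠ a) measurable_cos.aemeasurable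
    (measurableSet_singleton a).compl]
  refine (withDensity_absolutelyContinuous _ _).ae_le ?_
  change ∀ᵐ θ ∂volume.restrict (Ioo 0 π), cos θ ≠ a
  rw [ae_restrict_iff' measurableSet_Ioo]
  filter_upwards [compl_mem_ae_iff.2 (measure_singleton (arccos a))] with θ hθ h1 h2
  exact hθ (by rw [← h2, arccos_cos h1.1.le h1.2.le]; rfl)

lemma hasSum_log_one_add_sq {r : ℝ} (h0 : 0 ≤ r) (h1 : r < 1) (θ : ℝ) :
    HasSum (fun n : ℕ => (-1) ^ (n + 1) * r ^ n / n * cos (n * θ))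
      (log (1 + 2 * r * cos θ + r ^ 2) / 2) := by
  have hz : ‖(r : ℂ) * Complex.exp (θ * Complex.I)‖ < 1 := by
    rw [norm_mul, Complex.norm_exp_ofReal_mul_I, mul_one, Complex.norm_real, norm_eq_abs,
      abs_of_nonneg h0]
    exact h1
  have h := Complex.hasSum_re (Complex.hasSum_taylorSeries_log hz)
  convert h using 1
  · ext n
    rw [mul_pow, ← Complex.exp_nat_mul, ← mul_assoc (n : ℂ), ← Complex.ofReal_natCast,
      ← Complex.ofReal_mul]
    have : (-1 : ℂ) ^ (n + 1) * ((r : ℂ) ^ n * Complex.exp (((n : ℝ) * θ : ℝ) * Complex.I)) /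
        ((n : ℝ) : ℂ) = (((-1) ^ (n + 1) * r ^ n / n : ℝ) : ℂ) *
          Complex.exp (((n : ℝ) * θ : ℝ) * Complex.I) := by
      push_cast; ring
    rw [this, Complex.re_ofReal_mul, Complex.exp_ofReal_mul_I_re]
  · rw [Complex.log_re, Complex.norm_def, log_sqrt (Complex.normSq_nonneg _)]
    congr 2
    rw [Complex.normSq_apply]
    simp only [Complex.add_re, Complex.add_im, Complex.one_re, Complex.one_im,
      Complex.re_ofReal_mul, Complex.im_ofReal_mul, Complex.exp_ofReal_mul_I_re,
      Complex.exp_ofReal_mul_I_im]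
    linear_combination -r ^ 2 * sin_sq_add_cos_sq θ

lemma hasSum_integral_log_one_add_sq {r : ℝ} (h0 : 0 ≤ r) (h1 : r < 1) {w : ℝ → ℝ}
    (hw : Continuous w) (hw1 : ∀ θ, |w θ| ≤ 1) (a b : ℝ) :
    HasSum (fun n : ℕ => (-1) ^ (n + 1) * r ^ n / n * ∫ θ in a..b, w θ * cos (n * θ))
      (∫ θ in a..b, w θ * (log (1 + 2 * r * cos θ + r ^ 2) / 2)) := by
  have h := intervalIntegral.hasSum_integral_of_dominated_convergence
    (μ := volume) (a := a) (b := b)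
    (F := fun (n : ℕ) θ => (-1) ^ (n + 1) * r ^ n / n * (w θ * cos (n * θ)))
    (f := fun θ => w θ * (log (1 + 2 * r * cos θ + r ^ 2) / 2))
    (fun n _ => r ^ n) (fun n => (by fun_prop)) (fun n => ae_of_all _ fun θ _ => ?_)
    (ae_of_all _ fun θ _ => summable_geometric_of_lt_one h0 h1) (by simp)
    (ae_of_all _ fun θ _ => ?_)
  · simpa only [intervalIntegral.integral_const_mul] using h
  · rw [norm_eq_abs, abs_mul, abs_div, abs_mul, abs_pow, abs_neg, abs_one, one_pow, one_mul,
      abs_pow, abs_of_nonneg h0, abs_mul, Nat.abs_cast]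
    have hwc : |w θ| * |cos (n * θ)| ≤ 1 := mul_le_one₀ (hw1 θ) (abs_nonneg _) (abs_cos_le_one _)
    have hn : r ^ n / n ≤ r ^ n := by
      rcases n.eq_zero_or_pos with rfl | hn
      · simp
      · exact div_le_self (by positivity) (by exact_mod_cast hn)
    calc r ^ n / n * (|w θ| * |cos (n * θ)|) ≤ r ^ n * 1 := by gcongr
      _ = r ^ n := mul_one _
  · have := (hasSum_log_one_add_sq h0 h1 θ).mul_left (w θ)
    simpa only [mul_left_comm] using this

lemma integral_cos_mul_eq_zero {m : ℤ} (hm : m ≠ 0) : ∫ θ in 0..π, cos (m * θ) = 0 := by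
  rw [intervalIntegral.integral_comp_mul_left (fun θ => cos θ) (by exact_mod_cast hm),
    integral_cos]
  simp

lemma integral_sin_sq_mul_cos_nat_mul {n : ℕ} (hn : n ≠ 0) :
    ∫ θ in 0..π, sin θ ^ 2 * cos (n * θ) = if n = 2 then -π / 4 else 0 := by
  have h : ∀ θ : ℝ, sin θ ^ 2 * cos (n * θ) = 1 / 2 * cos ((n : ℤ) * θ) -
      (1 / 4 * cos ((n + 2 : ℤ) * θ) + 1 / 4 * cos ((n - 2 : ℤ) * θ)) := fun θ => by
    push_cast
    rw [add_mul, sub_mul, cos_add, cos_sub, sin_sq_eq_half_sub]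
    ring
  have hi : ∀ (c : ℝ) (m : ℤ), IntervalIntegrable (fun θ => c * cos (m * θ)) volume 0 π :=
    fun c m => Continuous.intervalIntegrable (by fun_prop) _ _
  simp only [h]
  rw [intervalIntegral.integral_sub (hi _ _) ((hi _ _).add (hi _ _)),
    intervalIntegral.integral_add (hi _ _) (hi _ _)]
  simp only [intervalIntegral.integral_const_mul]
  rw [integral_cos_mul_eq_zero (by exact_mod_cast hn), integral_cos_mul_eq_zero (by omega)]
  split_ifs with h2
  · subst h2; simp; ring
  · rw [integral_cos_mul_eq_zero (by omega)]; simp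

lemma integral_sin_sq_mul_log_of_lt_one {r : ℝ} (h0 : 0 ≤ r) (h1 : r < 1) :
    ∫ θ in 0..π, sin θ ^ 2 * (log (1 + 2 * r * cos θ + r ^ 2) / 2) = π / 2 * (r ^ 2 / 4) := by
  have h := hasSum_integral_log_one_add_sq h0 h1 (w := fun θ => sin θ ^ 2) (by fun_prop)
    (fun θ => by simpa using sin_sq_le_one θ) 0 π
  refine h.unique ?_
  convert hasSum_ite_eq 2 (π / 2 * (r ^ 2 / 4)) using 2 with n
  rcases eq_or_ne n 0 with rfl | hn
  · simp
  · rw [integral_sin_sq_mul_cos_nat_mul hn]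
    split_ifs with h2
    · subst h2; norm_num; ring
    · simp

lemma integral_sin_sq_mul_log_of_one_lt {r : ℝ} (h1 : 1 < r) :
    ∫ θ in 0..π, sin θ ^ 2 * (log (1 + 2 * r * cos θ + r ^ 2) / 2) =
      π / 2 * (log r + 1 / (4 * r ^ 2)) := by
  have hr : 0 < r := by linarith
  have hinv : r⁻¹ < 1 := inv_lt_one_of_one_lt₀ h1
  have hpos : ∀ θ, 0 < 1 + 2 * r⁻¹ * cos θ + r⁻¹ ^ 2 := fun θ => by
    have := neg_one_le_cos θ
    have := inv_pos.2 hr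
    nlinarith [sq_pos_of_pos (sub_pos.2 hinv)]
  have h : ∀ θ : ℝ, sin θ ^ 2 * (log (1 + 2 * r * cos θ + r ^ 2) / 2) =
      sin θ ^ 2 * log r + sin θ ^ 2 * (log (1 + 2 * r⁻¹ * cos θ + r⁻¹ ^ 2) / 2) := fun θ => by
    have : 1 + 2 * r * cos θ + r ^ 2 = r ^ 2 * (1 + 2 * r⁻¹ * cos θ + r⁻¹ ^ 2) := by
      field_simp; ring
    rw [this, log_mul (by positivity) (hpos θ).ne', log_pow]
    push_cast; ring
  simp only [h]
  rw [intervalIntegral.integral_add, integral_sin_sq_mul_log_of_lt_one (by positivity) hinv,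
    intervalIntegral.integral_mul_const, integral_sin_sq]
  · simp; field_simp
  · exact Continuous.intervalIntegrable (by fun_prop) _ _
  · refine Continuous.intervalIntegrable ?_ _ _
    exact (by fun_prop : Continuous fun θ : ℝ => sin θ ^ 2).mul
      ((Continuous.log (by fun_prop) fun θ => (hpos θ).ne').div_const 2)

/-- The nontrivial Dirichlet character modulo `3`, as a real-valued function. -/
noncomputable def chiThree (n : ℕ) : ℝ := if n % 3 = 1 then 1 else if n % 3 = 2 then -1 else 0

lemma abs_chiThree_le (n : ℕ) : |chiThree n| ≤ 1 := by
  unfold chiThree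
  split_ifs <;> simp

lemma chiThree_two_mul (n : ℕ) : chiThree (2 * n) = -chiThree n := by
  unfold chiThree
  have : n % 3 < 3 := Nat.mod_lt _ (by norm_num)
  rw [Nat.mul_mod]
  interval_cases n % 3 <;> simp

lemma cos_two_pi_div_three : cos (2 * π / 3) = -(1 / 2) := by
  rw [show 2 * π / 3 = π - π / 3 by ring, cos_pi_sub, cos_pi_div_three]

lemma sin_two_pi_div_three : sin (2 * π / 3) = √3 / 2 := by
  rw [show 2 * π / 3 = π - π / 3 by ring, sin_pi_sub, sin_pi_div_three]

lemma sin_nat_mul_two_pi_div_three (n : ℕ) : sin (n * (2 * π / 3)) = √3 / 2 * chiThree n := by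
  have h2 : sin (2 * (2 * π / 3)) = -(√3 / 2) := by
    rw [show 2 * (2 * π / 3) = π / 3 + π by ring, sin_add_pi, sin_pi_div_three]
  have hn : (n : ℝ) = (n % 3 : ℕ) + 3 * (n / 3 : ℕ) := by exact_mod_cast (Nat.mod_add_div n 3).symm
  have harg : n * (2 * π / 3) = (n % 3 : ℕ) * (2 * π / 3) + (n / 3 : ℕ) * (2 * π) := by
    rw [hn]; ring
  rw [harg, sin_add_nat_mul_two_pi]
  unfold chiThree
  have : n % 3 < 3 := Nat.mod_lt _ (by norm_num)
  interval_cases n % 3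
  · simp
  · simp [sin_two_pi_div_three]
  · simp [h2]

lemma summable_chiThree_mul {e : ℕ → ℝ} (he : ∀ n, |e n| ≤ 1) :
    Summable fun n : ℕ => e n * (chiThree n / (n : ℝ) ^ 2) := by
  refine Summable.of_norm_bounded (Real.summable_one_div_nat_pow.2 (by norm_num : 1 < 2))
    fun n => ?_
  rw [norm_eq_abs, abs_mul, abs_div, abs_of_nonneg (by positivity : (0 : ℝ) ≤ (n : ℝ) ^ 2)]
  calc |e n| * (|chiThree n| / (n : ℝ) ^ 2) ≤ 1 * (1 / (n : ℝ) ^ 2) := by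
        gcongr
        · exact he n
        · exact abs_chiThree_le n
    _ = _ := one_mul _

lemma tsum_alternating_chiThree :
    ∑' n : ℕ, (-1) ^ (n + 1) * (chiThree n / (n : ℝ) ^ 2) =
      3 / 2 * ∑' n : ℕ, chiThree n / (n : ℝ) ^ 2 := by
  have hL : Summable fun n : ℕ => chiThree n / (n : ℝ) ^ 2 := by
    simpa using summable_chiThree_mul (e := fun _ => 1) (by simp)
  have hA : Summable fun n : ℕ => (-1) ^ (n + 1) * (chiThree n / (n : ℝ) ^ 2) :=
    summable_chiThree_mul (by simp)
  have hi2 : Function.Injective fun k : ℕ => 2 * k := fun a b h => by simpa using h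
  have hi3 : Function.Injective fun k : ℕ => 2 * k + 1 := fun a b h => by simpa using h
  have e1 := tsum_even_add_odd (f := fun n : ℕ => chiThree n / (n : ℝ) ^ 2)
    (hL.comp_injective hi2) (hL.comp_injective hi3)
  have e2 := tsum_even_add_odd
    (f := fun n : ℕ => (-1) ^ (n + 1) * (chiThree n / (n : ℝ) ^ 2))
    (hA.comp_injective hi2) (hA.comp_injective hi3)
  have h3 : ∀ k : ℕ, chiThree (2 * k) / ((2 * k : ℕ) : ℝ) ^ 2 =
      -(1 / 4) * (chiThree k / (k : ℝ) ^ 2) := fun k => by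
    rw [chiThree_two_mul]
    push_cast
    rw [mul_pow]
    ring
  have he : ∀ k : ℕ, (-1 : ℝ) ^ (2 * k + 1) = -1 := fun k => by simp [pow_succ]
  have ho : ∀ k : ℕ, (-1 : ℝ) ^ (2 * k + 1 + 1) = 1 := fun k => by simp [pow_succ]
  simp only [h3, he, ho, tsum_mul_left, one_mul] at e1 e2
  linarith

lemma one_add_two_mul_cos_add_sq_ge {r θ : ℝ} (hr : 0 ≤ r) (hθ : θ ∈ Icc 0 (2 * π / 3)) :
    3 / 4 ≤ 1 + 2 * r * cos θ + r ^ 2 := by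
  have hc : -(1 / 2) ≤ cos θ := by
    have h := cos_le_cos_of_nonneg_of_le_pi hθ.1 (by linarith [pi_pos]) hθ.2
    rwa [cos_two_pi_div_three] at h
  nlinarith [sq_nonneg (r - 1 / 2)]

lemma integral_log_two_add_two_mul_cos :
    ∫ θ in 0..(2 * π / 3), log (2 + 2 * cos θ) / 2 =
      3 * √3 / 4 * ∑' n : ℕ, chiThree n / (n : ℝ) ^ 2 := by
  have hpi := pi_pos
  have hcont : Continuous fun r : ℝ => ∫ θ in 0..(2 * π / 3),
      log (max (1 + 2 * r * cos θ + r ^ 2) (3 / 4)) / 2 := by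
    refine intervalIntegral.continuous_parametric_intervalIntegral_of_continuous' ?_ _ _
    refine Continuous.div_const (Continuous.log (by fun_prop) fun p => ?_) 2
    exact (lt_of_lt_of_le (by norm_num) (le_max_right _ _)).ne'
  have hmax : ∀ r : ℝ, 0 ≤ r → ∫ θ in 0..(2 * π / 3),
      log (max (1 + 2 * r * cos θ + r ^ 2) (3 / 4)) / 2 =
      ∫ θ in 0..(2 * π / 3), log (1 + 2 * r * cos θ + r ^ 2) / 2 := fun r hr => by
    refine intervalIntegral.integral_congr fun θ hθ => ?_
    rw [uIcc_of_le (by positivity)] at hθ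
    simp only [max_eq_left (one_add_two_mul_cos_add_sq_ge hr hθ)]
  have htsum : ContinuousOn (fun r : ℝ => ∑' n : ℕ,
      ((-1) ^ (n + 1) * r ^ n) * (chiThree n / (n : ℝ) ^ 2)) (Icc 0 1) := by
    refine continuousOn_tsum (u := fun n : ℕ => 1 / (n : ℝ) ^ 2) (fun n => by fun_prop)
      (Real.summable_one_div_nat_pow.2 (by norm_num : 1 < 2)) fun n r hr => ?_
    rw [norm_eq_abs, abs_mul, abs_div, abs_of_nonneg (by positivity : (0 : ℝ) ≤ (n : ℝ) ^ 2),
      abs_mul, abs_pow, abs_pow, abs_neg, abs_one, one_pow, one_mul, abs_of_nonneg hr.1,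
      ← one_mul (1 / (n : ℝ) ^ 2)]
    gcongr
    · exact pow_le_one₀ hr.1 hr.2
    · exact abs_chiThree_le n
  have heq : ∀ r ∈ Ico (0 : ℝ) 1, ∫ θ in 0..(2 * π / 3),
      log (max (1 + 2 * r * cos θ + r ^ 2) (3 / 4)) / 2 =
      √3 / 2 * ∑' n : ℕ, ((-1) ^ (n + 1) * r ^ n) * (chiThree n / (n : ℝ) ^ 2) := fun r hr => by
    rw [hmax r hr.1, ← tsum_mul_left]
    have h := (hasSum_integral_log_one_add_sq hr.1 hr.2 (w := fun _ => 1) continuous_const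
      (by simp) 0 (2 * π / 3)).tsum_eq
    simp only [one_mul] at h
    rw [← h]
    refine tsum_congr fun n => ?_
    rcases eq_or_ne n 0 with rfl | hn
    · simp
    · rw [intervalIntegral.integral_comp_mul_left (fun θ => cos θ) (by exact_mod_cast hn),
        integral_cos, sin_nat_mul_two_pi_div_three]
      simp
      field_simp
  have hlim : Filter.Tendsto (fun r : ℝ => r) (nhdsWithin 1 (Ico 0 1)) (nhds 1) :=
    nhdsWithin_le_nhds
  have : (nhdsWithin (1 : ℝ) (Ico 0 1)).NeBot := by
    rw [← mem_closure_iff_nhdsWithin_neBot, closure_Ico (by norm_num)]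
    simp
  have t1 := (hcont.tendsto 1).comp hlim
  have t2 := ((htsum 1 (by simp)).mono Ico_subset_Icc_self).tendsto.const_mul (√3 / 2)
  have h := tendsto_nhds_unique_of_eventuallyEq t1 t2
    (Filter.eventually_of_mem self_mem_nhdsWithin heq)
  rw [hmax 1 zero_le_one] at h
  simp only [one_pow, mul_one, tsum_alternating_chiThree] at h
  convert h using 1
  · refine intervalIntegral.integral_congr fun θ _ => ?_
    ring_nf
  · ring

/-- The mean of `log ‖1 + x + y‖` over unit `y`, as a function of `t = Re x ≠ -1/2`. -/
noncomputable def innerMean (t : ℝ) : ℝ :=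
  if t < -(1 / 2) then (2 + 2 * t) / 4 else log (2 + 2 * t) / 2 + 1 / (4 * (2 + 2 * t))

lemma measurable_innerMean : Measurable innerMean := by
  unfold innerMean
  exact Measurable.ite measurableSet_Iio (by fun_prop) (by fun_prop)

lemma two_add_two_mul_cos_pos {θ : ℝ} (hθ : θ ∈ Icc 0 (2 * π / 3)) : 0 < 2 + 2 * cos θ := by
  have := one_add_two_mul_cos_add_sq_ge zero_le_one hθ
  linarith

lemma continuousOn_log_two_add_two_mul_cos :
    ContinuousOn (fun θ => log (2 + 2 * cos θ) / 2) (uIcc 0 (2 * π / 3)) := by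
  rw [uIcc_of_le (by positivity)]
  exact (ContinuousOn.log (by fun_prop) fun θ hθ => (two_add_two_mul_cos_pos hθ).ne').div_const 2

lemma continuousOn_sin_sq_mul_outer : ContinuousOn (fun θ => sin θ ^ 2 *
    (log (2 + 2 * cos θ) / 2 + 1 / (4 * (2 + 2 * cos θ)))) (uIcc 0 (2 * π / 3)) := by
  refine (by fun_prop : Continuous fun θ : ℝ => sin θ ^ 2).continuousOn.mul
    (continuousOn_log_two_add_two_mul_cos.add (ContinuousOn.div (by fun_prop) (by fun_prop) ?_))
  intro θ hθ
  rw [uIcc_of_le (by positivity)] at hθ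
  have := two_add_two_mul_cos_pos hθ
  positivity

lemma integral_sin_sq_mul_outer :
    ∫ θ in 0..(2 * π / 3), sin θ ^ 2 * (log (2 + 2 * cos θ) / 2 + 1 / (4 * (2 + 2 * cos θ))) =
      3 * √3 / 8 * (∑' n : ℕ, chiThree n / (n : ℝ) ^ 2) + π / 6 - 7 * √3 / 32 := by
  have hsub : ∫ θ in 0..(2 * π / 3),
      (sin θ ^ 2 * (log (2 + 2 * cos θ) / 2 + 1 / (4 * (2 + 2 * cos θ))) -
        1 / 2 * (log (2 + 2 * cos θ) / 2)) = π / 6 - 7 * √3 / 32 := by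
    rw [intervalIntegral.integral_eq_sub_of_hasDerivAt (f := fun θ =>
      -(1 / 2) * (log (2 + 2 * cos θ) / 2 * (sin (2 * θ) / 2) +
        1 / 2 * (sin θ - θ / 2 - sin (2 * θ) / 4)) + (θ - sin θ) / 8)]
    · have h2 : sin (2 * (2 * π / 3)) = -(√3 / 2) := by
        rw [sin_two_mul, sin_two_pi_div_three, cos_two_pi_div_three]; ring
      simp only [h2, sin_two_pi_div_three, cos_two_pi_div_three]
      norm_num
      ring
    · intro θ hθ
      rw [uIcc_of_le (by positivity)] at hθ
      have hpos := two_add_two_mul_cos_pos hθ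
      have hc : HasDerivAt (fun θ => log (2 + 2 * cos θ)) (2 * -sin θ / (2 + 2 * cos θ)) θ :=
        (((hasDerivAt_cos θ).const_mul 2).const_add 2).log hpos.ne'
      have hs : HasDerivAt (fun θ => sin (2 * θ)) (cos (2 * θ) * (2 * 1)) θ :=
        ((hasDerivAt_id θ).const_mul 2).sin
      have h := ((((hc.div_const 2).mul (hs.div_const 2)).add
        ((((hasDerivAt_sin θ).sub ((hasDerivAt_id θ).div_const 2)).sub
          (hs.div_const 4)).const_mul (1 / 2))).const_mul (-(1 / 2))).add
        (((hasDerivAt_id θ).sub (hasDerivAt_sin θ)).div_const 8)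
      refine h.congr_deriv ?_
      have hpos' : (1 + cos θ) ≠ 0 := by linarith
      have e1 : (2 + 2 * cos θ) = 2 * (1 + cos θ) := by ring
      rw [e1, cos_two_mul, sin_two_mul]
      generalize log (2 * (1 + cos θ)) = l
      field_simp
      have hsin : sin θ ^ 2 = 1 - cos θ ^ 2 := sin_sq θ
      ring_nf
      simp only [hsin]
      ring
    · exact (continuousOn_sin_sq_mul_outer.sub
        (continuousOn_log_two_add_two_mul_cos.const_smul (1 / 2 : ℝ))).intervalIntegrable
  rw [intervalIntegral.integral_sub continuousOn_sin_sq_mul_outer.intervalIntegrable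
    (continuousOn_log_two_add_two_mul_cos.intervalIntegrable.const_mul _),
    intervalIntegral.integral_const_mul, integral_log_two_add_two_mul_cos] at hsub
  linarith

lemma integral_sin_sq_mul_inner :
    ∫ θ in (2 * π / 3)..π, sin θ ^ 2 * ((2 + 2 * cos θ) / 4) = π / 12 - √3 / 8 := by
  rw [intervalIntegral.integral_eq_sub_of_hasDerivAt (f := fun θ =>
      (θ - sin θ * cos θ) / 4 + sin θ ^ 3 / 6)]
  · have h3 : √3 ^ 3 = 3 * √3 := by rw [pow_succ, sq_sqrt (by norm_num)]
    simp only [sin_two_pi_div_three, cos_two_pi_div_three, div_pow, h3, sin_pi]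
    ring
  · intro θ _
    have h := (((hasDerivAt_id θ).sub ((hasDerivAt_sin θ).mul (hasDerivAt_cos θ))).div_const
      4).add (((hasDerivAt_sin θ).pow 3).div_const 6)
    refine h.congr_deriv ?_
    have hsin : cos θ ^ 2 = 1 - sin θ ^ 2 := cos_sq' θ
    simp
    ring_nf
    simp only [hsin]
    ring
  · exact Continuous.intervalIntegrable (by fun_prop) _ _

lemma integral_sin_sq_mul_innerMean :
    ∫ θ in 0..π, sin θ ^ 2 * innerMean (cos θ) =
      3 * √3 / 8 * (∑' n : ℕ, chiThree n / (n : ℝ) ^ 2) + π / 4 - 11 * √3 / 32 := by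
  have hpi := pi_pos
  have hle1 : (0 : ℝ) ≤ 2 * π / 3 := by positivity
  have hle2 : 2 * π / 3 ≤ π := by linarith
  have h1 : EqOn (fun θ => sin θ ^ 2 *
      (log (2 + 2 * cos θ) / 2 + 1 / (4 * (2 + 2 * cos θ))))
      (fun θ => sin θ ^ 2 * innerMean (cos θ)) (uIoc 0 (2 * π / 3)) := fun θ hθ => by
    rw [uIoc_of_le hle1] at hθ
    have hc := cos_le_cos_of_nonneg_of_le_pi hθ.1.le hle2 hθ.2
    rw [cos_two_pi_div_three] at hc
    simp only [innerMean, if_neg hc.not_gt]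
  have h2 : EqOn (fun θ => sin θ ^ 2 * ((2 + 2 * cos θ) / 4))
      (fun θ => sin θ ^ 2 * innerMean (cos θ)) (uIoc (2 * π / 3) π) := fun θ hθ => by
    rw [uIoc_of_le hle2] at hθ
    have hc := cos_lt_cos_of_nonneg_of_le_pi hle1 hθ.2 hθ.1
    rw [cos_two_pi_div_three] at hc
    simp only [innerMean, if_pos hc]
  have i1 : IntervalIntegrable (fun θ => sin θ ^ 2 * innerMean (cos θ)) volume 0 (2 * π / 3) :=
    continuousOn_sin_sq_mul_outer.intervalIntegrable.congr h1
  have i2 : IntervalIntegrable (fun θ => sin θ ^ 2 * innerMean (cos θ)) volume (2 * π / 3) π :=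
    (Continuous.intervalIntegrable (by fun_prop) _ _).congr h2
  rw [← intervalIntegral.integral_add_adjacent_intervals i1 i2,
    ← intervalIntegral.integral_congr_ae (ae_of_all _ h1),
    ← intervalIntegral.integral_congr_ae (ae_of_all _ h2),
    integral_sin_sq_mul_outer, integral_sin_sq_mul_inner]
  ring

lemma norm_coe_add_sq (r : ℝ) (y : sphere (0 : ℍ[ℝ]) 1) :
    ‖(r : ℍ[ℝ]) + y‖ ^ 2 = 1 + 2 * r * (y : ℍ[ℝ]).re + r ^ 2 := by
  have hy : Quaternion.normSq (y : ℍ[ℝ]) = 1 := by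
    rw [Quaternion.normSq_eq_norm_mul_self, norm_eq_of_mem_sphere y, one_mul]
  rw [sq, ← Quaternion.normSq_eq_norm_mul_self]
  rw [Quaternion.normSq_def'] at hy ⊢
  simp only [Quaternion.re_add, Quaternion.imI_add, Quaternion.imJ_add, Quaternion.imK_add,
    Quaternion.re_coe, Quaternion.imI_coe, Quaternion.imJ_coe, Quaternion.imK_coe]
  linear_combination hy

lemma integral_log_norm_add {a : ℍ[ℝ]} (ha : ‖a‖ ≠ 1) :
    ∫ y, log ‖a + (y : ℍ[ℝ])‖ ∂muH =
      if ‖a‖ < 1 then ‖a‖ ^ 2 / 4 else log ‖a‖ + 1 / (4 * ‖a‖ ^ 2) := by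
  rcases eq_or_ne a 0 with rfl | h0
  · simp
  have hmul : ∀ y : sphere (0 : ℍ[ℝ]) 1,
      log ‖a + ((unitPart a * y : sphere (0 : ℍ[ℝ]) 1) : ℍ[ℝ])‖ =
      log (1 + 2 * ‖a‖ * (y : ℍ[ℝ]).re + ‖a‖ ^ 2) / 2 := fun y => by
    have hu : a = unitPart a * ((‖a‖ : ℝ) : ℍ[ℝ]) := by
      rw [coe_unitPart h0, Quaternion.mul_coe_eq_smul, smul_smul,
        mul_inv_cancel₀ (norm_ne_zero_iff.2 h0), one_smul]
    have hn : ‖a + ((unitPart a * y : sphere (0 : ℍ[ℝ]) 1) : ℍ[ℝ])‖ =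
        ‖((‖a‖ : ℝ) : ℍ[ℝ]) + y‖ := by
      have hadd : a + ((unitPart a * y : sphere (0 : ℍ[ℝ]) 1) : ℍ[ℝ]) =
          unitPart a * (((‖a‖ : ℝ) : ℍ[ℝ]) + y) := by
        rw [mul_add, ← hu, Metric.unitSphere.coe_mul]
      rw [hadd, norm_mul, norm_eq_of_mem_sphere, one_mul]
    rw [← norm_coe_add_sq, hn, log_pow]
    push_cast; ring
  rw [← integral_mul_left_eq_self _ (unitPart a)]
  simp only [hmul]
  rw [integral_re_muH (F := fun t => log (1 + 2 * ‖a‖ * t + ‖a‖ ^ 2) / 2) (by fun_prop)]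
  split_ifs with h
  · rw [integral_sin_sq_mul_log_of_lt_one (norm_nonneg a) h]
    field_simp
  · rw [integral_sin_sq_mul_log_of_one_lt (lt_of_le_of_ne (not_lt.1 h) ha.symm)]
    field_simp

lemma norm_one_add_sq (x : sphere (0 : ℍ[ℝ]) 1) :
    ‖1 + (x : ℍ[ℝ])‖ ^ 2 = 2 + 2 * (x : ℍ[ℝ]).re := by
  have h := norm_coe_add_sq 1 x
  rw [Quaternion.coe_one] at h
  rw [h]; ring

lemma norm_one_add_ne_one {x : sphere (0 : ℍ[ℝ]) 1} (hx : (x : ℍ[ℝ]).re ≠ -(1 / 2)) :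
    ‖1 + (x : ℍ[ℝ])‖ ≠ 1 := fun h => hx <| by
  have := norm_one_add_sq x
  rw [h] at this
  linarith

lemma integral_log_norm_one_add_add {x : sphere (0 : ℍ[ℝ]) 1}
    (hx : (x : ℍ[ℝ]).re ≠ -(1 / 2)) :
    ∫ y, log ‖1 + (x : ℍ[ℝ]) + (y : ℍ[ℝ])‖ ∂muH = innerMean (x : ℍ[ℝ]).re := by
  have hn := norm_one_add_sq x
  have hiff : ‖1 + (x : ℍ[ℝ])‖ < 1 ↔ (x : ℍ[ℝ]).re < -(1 / 2) := by
    rw [← sq_lt_one_iff₀ (norm_nonneg _), hn]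
    constructor <;> intro h <;> linarith
  rw [integral_log_norm_add (norm_one_add_ne_one hx), innerMean, ← hn, log_pow]
  simp only [hiff]
  congr 1
  push_cast; ring

lemma integrable_log_norm_add {a : ℍ[ℝ]} (ha : ‖a‖ ≠ 1) :
    Integrable (fun y : sphere (0 : ℍ[ℝ]) 1 => log ‖a + (y : ℍ[ℝ])‖) muH := by
  refine Continuous.integrable_of_hasCompactSupport (Continuous.log (by fun_prop) fun y h => ha ?_)
    (HasCompactSupport.of_compactSpace _)
  rw [norm_eq_zero, add_eq_zero_iff_eq_neg] at h
  rw [h, norm_neg, norm_eq_of_mem_sphere]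

lemma innerMean_nonneg (x : sphere (0 : ℍ[ℝ]) 1) : 0 ≤ innerMean (x : ℍ[ℝ]).re := by
  have hn := norm_one_add_sq x
  have : 0 ≤ 2 + 2 * (x : ℍ[ℝ]).re := hn ▸ sq_nonneg _
  unfold innerMean
  split_ifs with h
  · positivity
  · have : 0 ≤ log (2 + 2 * (x : ℍ[ℝ]).re) := log_nonneg (by linarith)
    positivity

lemma abs_log_norm_le (x y : sphere (0 : ℍ[ℝ]) 1) :
    |log ‖1 + (x : ℍ[ℝ]) + (y : ℍ[ℝ])‖| ≤ 4 - log ‖1 + (x : ℍ[ℝ]) + (y : ℍ[ℝ])‖ := by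
  have h3 : ‖1 + (x : ℍ[ℝ]) + (y : ℍ[ℝ])‖ ≤ 3 := by
    refine (norm_add₃_le).trans ?_
    rw [norm_one, norm_eq_of_mem_sphere, norm_eq_of_mem_sphere]
    norm_num
  have h2 : log ‖1 + (x : ℍ[ℝ]) + (y : ℍ[ℝ])‖ ≤ 2 := by
    rcases (norm_nonneg (1 + (x : ℍ[ℝ]) + (y : ℍ[ℝ]))).eq_or_lt with h | h
    · rw [← h]; simp
    · exact (log_le_sub_one_of_pos h).trans (by linarith)
  rw [abs_le]
  constructor <;> linarith

lemma integrable_log_norm_one_add_add :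
    Integrable (fun p : sphere (0 : ℍ[ℝ]) 1 × sphere (0 : ℍ[ℝ]) 1 =>
      log ‖1 + (p.1 : ℍ[ℝ]) + (p.2 : ℍ[ℝ])‖) (muH.prod muH) := by
  have hm : Measurable (fun p : sphere (0 : ℍ[ℝ]) 1 × sphere (0 : ℍ[ℝ]) 1 =>
      log ‖1 + (p.1 : ℍ[ℝ]) + (p.2 : ℍ[ℝ])‖) :=
    measurable_log.comp (by fun_prop : Continuous fun p : sphere (0 : ℍ[ℝ]) 1 ×
      sphere (0 : ℍ[ℝ]) 1 => ‖1 + (p.1 : ℍ[ℝ]) + (p.2 : ℍ[ℝ])‖).measurable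
  rw [integrable_prod_iff hm.aestronglyMeasurable]
  refine ⟨?_, ?_⟩
  · filter_upwards [ae_re_ne (-(1 / 2))] with x hx
    exact integrable_log_norm_add (norm_one_add_ne_one hx)
  · refine Integrable.of_bound (C := 4)
      (hm.norm.aestronglyMeasurable.integral_prod_right') ?_
    filter_upwards [ae_re_ne (-(1 / 2))] with x hx
    have hi := integrable_log_norm_add (norm_one_add_ne_one hx)
    rw [norm_of_nonneg (integral_nonneg fun _ => norm_nonneg _)]
    calc ∫ y, ‖log ‖1 + (x : ℍ[ℝ]) + (y : ℍ[ℝ])‖‖ ∂muH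
        ≤ ∫ y, (4 - log ‖1 + (x : ℍ[ℝ]) + (y : ℍ[ℝ])‖) ∂muH :=
          integral_mono hi.norm ((integrable_const 4).sub hi) fun y => abs_log_norm_le x y
      _ = 4 - innerMean (x : ℍ[ℝ]).re := by
          rw [integral_sub (integrable_const 4) hi, integral_log_norm_one_add_add hx]
          simp
      _ ≤ 4 := by linarith [innerMean_nonneg x]

end UnitQuaternion

/-- Smyth-type formula `m_ℍ(1 + x + y)`. -/
theorem mahlerH2_one_add_x_add_y :
    mahlerH2 (fun x y => 1 + x + y) =
      1 / 2 - 11 * Real.sqrt 3 / (16 * Real.pi)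
        + (3 * Real.sqrt 3 / (4 * Real.pi)) *
          ∑' n : ℕ, (if n % 3 = 1 then (1 : ℝ) else if n % 3 = 2 then -1 else 0) / (n : ℝ) ^ 2 := by
  change _ = _ + _ * ∑' n : ℕ, UnitQuaternion.chiThree n / (n : ℝ) ^ 2
  rw [mahlerH2, integral_prod _ UnitQuaternion.integrable_log_norm_one_add_add,
    integral_congr_ae (g := fun x : Metric.sphere (0 : ℍ[ℝ]) 1 =>
        UnitQuaternion.innerMean (x : ℍ[ℝ]).re)
      ((UnitQuaternion.ae_re_ne (-(1 / 2))).mono fun x hx =>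
        UnitQuaternion.integral_log_norm_one_add_add hx),
    UnitQuaternion.integral_re_muH UnitQuaternion.measurable_innerMean,
    UnitQuaternion.integral_sin_sq_mul_innerMean]
  field_simp
  ring
end
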